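/- arXiv:2605.21877 — 2 statements merged into one kernel-verified Lean document; each statement's English description precedes it below -/
import Mathlib

section
/- Let F := K4⁻ × F*. Then for every positive integer t, the family {F} is not t-stable; that is, the stability number ξ({F}) is infinite. -/
open scoped Classical

/-- A collection of finite edge sets is a 3-graph if every edge has exactly 3 vertices. -/
def IsThreeGraph {α : Type*} (H : Set (Finset α)) : Prop := ∀ e ∈ H, e.card = 3

/-- `φ` is a homomorphism of 3-graphs from `G` to `H`: the image of every edge of `G`
is a 3-element set that is an edge of `H`. -/
def IsHomOn {α β : Type*} (G : Set (Finset α)) (H : Set (Finset β)) (φ : α → β) : Prop :=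
  ∀ e ∈ G, (e.image φ).card = 3 ∧ e.image φ ∈ H

/-- `H` contains a subgraph isomorphic to `G`. -/
def ContainsCopy {α β : Type*} (G : Set (Finset α)) (H : Set (Finset β)) : Prop :=
  ∃ φ : α → β, Function.Injective φ ∧ ∀ e ∈ G, e.image φ ∈ H

/-- `K4⁻`, on vertices `a=0, b=1, c=2, d=3`, with edges `abc, abd, acd`. -/
def K4minus : Set (Finset (Fin 4)) := {{0,1,2}, {0,1,3}, {0,2,3}}

/-- `F*`, on vertices `1,…,7` (represented by `0,…,6`), with edges `123, 124, 345, 156, 257`. -/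
def Fstar : Set (Finset (Fin 7)) := {{0,1,2}, {0,1,3}, {2,3,4}, {0,4,5}, {1,4,6}}

/-- The categorical product of two 3-graphs: a 3-element set of pairs is an edge iff
its set of first coordinates is an edge of `G` and its set of second coordinates is an
edge of `H`. -/
def ProdGraph {α β : Type*} (G : Set (Finset α)) (H : Set (Finset β)) :
    Set (Finset (α × β)) :=
  {e | e.card = 3 ∧ e.image Prod.fst ∈ G ∧ e.image Prod.snd ∈ H}

/-- The 3-graph `F := K4⁻ × F*`. -/
def F : Set (Finset (Fin 4 × Fin 7)) := ProdGraph K4minus Fstar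

/-- `ex(n, {F})`: the maximum number of edges of an `n`-vertex 3-graph containing no
subgraph isomorphic to `F`. -/
noncomputable def exF (n : ℕ) : ℕ :=
  sSup {k | ∃ H : Set (Finset (Fin n)), IsThreeGraph H ∧ ¬ ContainsCopy F H ∧ H.ncard = k}

/-- The family `{F}` is `t`-stable: there are templates `G m 0, …, G m (t-1)` on `m`
vertices such that for every `δ > 0` there are `ε > 0` and `N₀` with: every `F`-free
3-graph `H` on `n ≥ N₀` vertices with more than `(1 - ε) · ex(n, {F})` edges can be
transformed into some `G n i` by adding and deleting at most `δ n³` edges after a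
relabelling of the vertices. -/
def TStableF (t : ℕ) : Prop :=
  ∃ G : (m : ℕ) → Fin t → Set (Finset (Fin m)),
    (∀ m i, IsThreeGraph (G m i)) ∧
    ∀ δ : ℝ, 0 < δ → ∃ ε : ℝ, 0 < ε ∧ ∃ N₀ : ℕ, ∀ n : ℕ, N₀ ≤ n →
      ∀ H : Set (Finset (Fin n)), IsThreeGraph H → ¬ ContainsCopy F H →
        (1 - ε) * (exF n : ℝ) < (H.ncard : ℝ) →
        ∃ i : Fin t, ∃ ψ : Equiv.Perm (Fin n),
          ((symmDiff ((fun e => e.image ⇑ψ) '' H) (G n i)).ncard : ℝ) ≤ δ * (n : ℝ) ^ 3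

/-!
A 3-graph with no homomorphic image of `F` has none of `K4⁻` or `F*` either, because the product
projects to both factors. In such a 3-graph any two vertices in the support of a maximiser of the
Lagrange polynomial with minimal support lie in an edge, whose third vertex is unique within the
support: two different choices produce a homomorphic image of `K4⁻` or `F*`. This bounds the edge
density by `2 / 9`, and supersaturation gives `ex(n, F) ≤ (1 + o(1)) n³ / 27`.

The bound is attained by a continuum of different examples. Take the four vertices of the Boolean
square and one apex per coordinate, forming an edge with each pair that differs in this coordinate.
Blow up the apexes with weight `1 / 6` each and the square with weights `α` and `1 / 3 - α`
alternating around it. The density is `2 / 9` for every `α`. The blow-ups are `F`-free because the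
apex preimages under a homomorphism from `F` would hit each edge exactly once, hence form the
row over the vertex `a` of `K4⁻`; then `F*` forces a triangle, over `b`, `c`, `d`, in a bipartite
link of one apex.

The mean square codegree is invariant under relabelling and is Lipschitz in the edit distance, but
it varies with `α`. Among `t + 1` well-separated values of `α`, two would have to be close to the
same one of `t` templates.
-/

open scoped BigOperators

section Edges

variable {U V W : Type*}

/-- `{x, y, z}` is an edge of `H`. The set is formed with classical decidable equality; `isEdge_iff`
passes to any other instance. -/
def IsEdge (H : Set (Finset V)) (x y z : V) : Prop := ({x, y, z} : Finset V) ∈ H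

lemma isEdge_iff [DecidableEq V] {H : Set (Finset V)} {x y z : V} :
    IsEdge H x y z ↔ ({x, y, z} : Finset V) ∈ H := by
  unfold IsEdge
  convert Iff.rfl

lemma isEdge_swap_left {H : Set (Finset V)} {x y z : V} : IsEdge H x y z ↔ IsEdge H y x z := by
  rw [IsEdge, IsEdge, Finset.insert_comm]

lemma isEdge_swap_right {H : Set (Finset V)} {x y z : V} : IsEdge H x y z ↔ IsEdge H x z y := by
  rw [IsEdge, IsEdge, Finset.pair_comm]

lemma isEdge_rotate {H : Set (Finset V)} {x y z : V} : IsEdge H x y z ↔ IsEdge H z x y := by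
  rw [isEdge_swap_right, isEdge_swap_left]

lemma IsThreeGraph.ne_of_isEdge {H : Set (Finset V)} (hH : IsThreeGraph H) {x y z : V}
    (h : IsEdge H x y z) : x ≠ y ∧ x ≠ z ∧ y ≠ z :=
  Finset.card_triple_eq_three_iff.1 (hH _ h)

lemma IsHomOn.isEdge {G : Set (Finset U)} {H : Set (Finset V)} {φ : U → V}
    (hφ : IsHomOn G H φ) {x y z : U} (h : IsEdge G x y z) : IsEdge H (φ x) (φ y) (φ z) := by
  simpa only [IsEdge, Finset.image_insert, Finset.image_singleton] using (hφ _ h).2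

lemma ContainsCopy.exists_isHomOn {G : Set (Finset U)} {H : Set (Finset V)}
    (h : ContainsCopy G H) (hG : IsThreeGraph G) : ∃ φ, IsHomOn G H φ := by
  obtain ⟨φ, hinj, hφ⟩ := h
  exact ⟨φ, fun e he => ⟨by rw [Finset.card_image_of_injective e hinj, hG e he], hφ e he⟩⟩

lemma isThreeGraph_prodGraph (G : Set (Finset U)) (H : Set (Finset V)) :
    IsThreeGraph (ProdGraph G H) := fun _ he => he.1

lemma IsHomOn.comp {G : Set (Finset U)} {H : Set (Finset V)} {K : Set (Finset W)} {ψ : V → W}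
    {φ : U → V} (hψ : IsHomOn H K ψ) (hφ : IsHomOn G H φ) : IsHomOn G K (ψ ∘ φ) :=
  fun e he => by simpa only [Finset.image_image] using hψ _ (hφ e he).2

lemma isHomOn_fst {G : Set (Finset U)} (hG : IsThreeGraph G) (H : Set (Finset V)) :
    IsHomOn (ProdGraph G H) G Prod.fst := fun _ he => ⟨hG _ he.2.1, he.2.1⟩

lemma isHomOn_snd {H : Set (Finset V)} (hH : IsThreeGraph H) (G : Set (Finset U)) :
    IsHomOn (ProdGraph G H) H Prod.snd := fun _ he => ⟨hH _ he.2.2, he.2.2⟩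

/-- The pullback of a 3-graph `H` along `c`: the triples mapped by `c` onto an edge of `H`. It is
the blow-up of `H` with the fibres of `c` as parts. -/
def comap (c : U → V) (H : Set (Finset V)) : Set (Finset U) := {e | e.card = 3 ∧ e.image c ∈ H}

lemma isThreeGraph_comap (c : U → V) (H : Set (Finset V)) : IsThreeGraph (comap c H) :=
  fun _ he => he.1

lemma isEdge_comap {c : U → V} {H : Set (Finset V)} (hH : IsThreeGraph H) {x y z : U} :
    IsEdge (comap c H) x y z ↔ IsEdge H (c x) (c y) (c z) := by
  simp only [IsEdge, comap, Set.mem_ofPred_eq, Finset.image_insert, Finset.image_singleton,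
    and_iff_right_iff_imp]
  intro h
  obtain ⟨hxy, hxz, hyz⟩ := hH.ne_of_isEdge h
  exact Finset.card_triple_eq_three_iff.2
    ⟨ne_of_apply_ne c hxy, ne_of_apply_ne c hxz, ne_of_apply_ne c hyz⟩

lemma isHomOn_comap {H : Set (Finset V)} (hH : IsThreeGraph H) (c : U → V) :
    IsHomOn (comap c H) H c := fun _ he => ⟨hH _ he.2, he.2⟩

lemma isThreeGraph_K4minus : IsThreeGraph K4minus := by
  rintro e (rfl | rfl | rfl) <;> rfl

lemma isThreeGraph_Fstar : IsThreeGraph Fstar := by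
  rintro e (rfl | rfl | rfl | rfl | rfl) <;> rfl

instance decidableIsEdgeK4minus (a b c : Fin 4) : Decidable (IsEdge K4minus a b c) :=
  decidable_of_iff (({a, b, c} : Finset (Fin 4)) ∈ ({{0,1,2}, {0,1,3}, {0,2,3}} :
    Finset (Finset (Fin 4)))) (by simp [isEdge_iff, K4minus])

instance decidableIsEdgeFstar (x y z : Fin 7) : Decidable (IsEdge Fstar x y z) :=
  decidable_of_iff (({x, y, z} : Finset (Fin 7)) ∈ ({{0,1,2}, {0,1,3}, {2,3,4}, {0,4,5}, {1,4,6}} :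
    Finset (Finset (Fin 7)))) (by simp [isEdge_iff, Fstar])

lemma IsEdge.prodGraph {G : Set (Finset U)} {H : Set (Finset V)} (hG : IsThreeGraph G)
    {a b c : U} {x y z : V} (habc : IsEdge G a b c) (hxyz : IsEdge H x y z) :
    IsEdge (ProdGraph G H) (a, x) (b, y) (c, z) := by
  obtain ⟨hab, hac, hbc⟩ := hG.ne_of_isEdge habc
  refine isEdge_iff.2 ⟨Finset.card_triple_eq_three_iff.2 ⟨by simp [hab], by simp [hac],
    by simp [hbc]⟩, ?_, ?_⟩
  · simpa only [IsEdge, Finset.image_insert, Finset.image_singleton] using habc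
  · simpa only [IsEdge, Finset.image_insert, Finset.image_singleton] using hxyz

lemma exists_isHomOn_K4minus {H : Set (Finset V)} (hH : IsThreeGraph H) {a b c d : V}
    (habc : IsEdge H a b c) (habd : IsEdge H a b d) (hacd : IsEdge H a c d) :
    ∃ φ, IsHomOn K4minus H φ := by
  refine ⟨![a, b, c, d], ?_⟩
  rintro e (rfl | rfl | rfl) <;>
    simpa [Finset.image_insert, IsEdge, hH _ habc, hH _ habd, hH _ hacd]

lemma exists_isHomOn_Fstar {H : Set (Finset V)} (hH : IsThreeGraph H) {a b c d e f g : V}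
    (habc : IsEdge H a b c) (habd : IsEdge H a b d) (hcde : IsEdge H c d e)
    (haef : IsEdge H a e f) (hbeg : IsEdge H b e g) : ∃ φ, IsHomOn Fstar H φ := by
  refine ⟨![a, b, c, d, e, f, g], ?_⟩
  rintro e (rfl | rfl | rfl | rfl | rfl) <;>
    simpa [Finset.image_insert, IsEdge, hH _ habc, hH _ habd, hH _ hcde, hH _ haef, hH _ hbeg]

lemma third_vertex_unique_of_cover {H : Set (Finset V)} (hH : IsThreeGraph H)
    (hK : ¬ ∃ φ, IsHomOn K4minus H φ) (hF : ¬ ∃ φ, IsHomOn Fstar H φ) {S : Set V}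
    (hcover : ∀ i ∈ S, ∀ j ∈ S, i ≠ j → ∃ k ∈ S, IsEdge H i j k) {i j k l : V} (hi : i ∈ S)
    (hj : j ∈ S) (hk : k ∈ S) (hl : l ∈ S) (hijk : IsEdge H i j k) (hijl : IsEdge H i j l) :
    k = l := by
  by_contra hkl
  obtain ⟨p, hp, hklp⟩ := hcover k hk l hl hkl
  have hpkl : IsEdge H p k l := isEdge_rotate.1 hklp
  by_cases hpi : p = i
  · exact hK (exists_isHomOn_K4minus hH hijk hijl (hpi ▸ hpkl))
  by_cases hpj : p = j
  · exact hK (exists_isHomOn_K4minus hH (isEdge_swap_left.1 hijk) (isEdge_swap_left.1 hijl)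
      (hpj ▸ hpkl))
  obtain ⟨q, -, hipq⟩ := hcover i hi p hp (Ne.symm hpi)
  obtain ⟨r, -, hjpr⟩ := hcover j hj p hp (Ne.symm hpj)
  exact hF (exists_isHomOn_Fstar hH hijk hijl hklp hipq hjpr)

end Edges

section Lagrangian

variable {V : Type*} {H : Set (Finset V)}

/-- The indicator that `{x, y, z}` is an edge of `H`, as a real number. -/
noncomputable def edgeInd (H : Set (Finset V)) (x y z : V) : ℝ := if IsEdge H x y z then 1 else 0

lemma edgeInd_of_isEdge {x y z : V} (h : IsEdge H x y z) : edgeInd H x y z = 1 := if_pos h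

lemma edgeInd_of_not_isEdge {x y z : V} (h : ¬ IsEdge H x y z) : edgeInd H x y z = 0 := if_neg h

lemma isEdge_of_edgeInd_ne_zero {x y z : V} (h : edgeInd H x y z ≠ 0) : IsEdge H x y z :=
  by_contra fun hxyz => h (edgeInd_of_not_isEdge hxyz)

lemma edgeInd_nonneg (H : Set (Finset V)) (x y z : V) : 0 ≤ edgeInd H x y z := by
  unfold edgeInd; split_ifs <;> norm_num

lemma edgeInd_le_one (H : Set (Finset V)) (x y z : V) : edgeInd H x y z ≤ 1 := by
  unfold edgeInd; split_ifs <;> norm_num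

lemma edgeInd_swap_left (H : Set (Finset V)) (x y z : V) : edgeInd H x y z = edgeInd H y x z := by
  simp only [edgeInd, isEdge_swap_left (x := x)]

lemma edgeInd_swap_right (H : Set (Finset V)) (x y z : V) :
    edgeInd H x y z = edgeInd H x z y := by
  simp only [edgeInd, isEdge_swap_right (y := y)]

variable [Fintype V]

/-- The polarised Lagrange polynomial of `H`: the symmetric trilinear form summing `x i * y j * z k`
over the ordered edges `(i, j, k)`. The diagonal `edgeForm H x x x` is `6` times the Lagrange
polynomial. -/
noncomputable def edgeForm (H : Set (Finset V)) :
    (V → ℝ) →ₗ[ℝ] (V → ℝ) →ₗ[ℝ] (V → ℝ) →ₗ[ℝ] ℝ :=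
  ∑ i, ∑ j, ∑ k, edgeInd H i j k •
    (LinearMap.proj i).smulRight ((LinearMap.proj j).smulRight (LinearMap.proj k))

lemma edgeForm_apply (H : Set (Finset V)) (x y z : V → ℝ) :
    edgeForm H x y z = ∑ i, ∑ j, ∑ k, edgeInd H i j k * (x i * (y j * z k)) := by
  simp [edgeForm, LinearMap.sum_apply]

lemma edgeForm_swap_left (H : Set (Finset V)) (x y z : V → ℝ) :
    edgeForm H x y z = edgeForm H y x z := by
  rw [edgeForm_apply, edgeForm_apply, Finset.sum_comm]
  refine Finset.sum_congr rfl fun j _ => Finset.sum_congr rfl fun i _ =>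
    Finset.sum_congr rfl fun k _ => ?_
  rw [edgeInd_swap_left H i, mul_left_comm (x i)]

lemma edgeForm_swap_right (H : Set (Finset V)) (x y z : V → ℝ) :
    edgeForm H x y z = edgeForm H x z y := by
  rw [edgeForm_apply, edgeForm_apply]
  refine Finset.sum_congr rfl fun i _ => Finset.sum_comm.trans <|
    Finset.sum_congr rfl fun k _ => Finset.sum_congr rfl fun j _ => ?_
  rw [edgeInd_swap_right H i, mul_comm (y j)]

lemma edgeForm_nonneg {x y z : V → ℝ} (hx : 0 ≤ x) (hy : 0 ≤ y) (hz : 0 ≤ z) :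
    0 ≤ edgeForm H x y z := by
  rw [edgeForm_apply]
  exact Finset.sum_nonneg fun i _ => Finset.sum_nonneg fun j _ => Finset.sum_nonneg fun k _ =>
    mul_nonneg (edgeInd_nonneg H i j k) (mul_nonneg (hx i) (mul_nonneg (hy j) (hz k)))

lemma edgeForm_single_single (H : Set (Finset V)) (i j : V) (x : V → ℝ) :
    edgeForm H (Pi.single i 1) (Pi.single j 1) x = ∑ k, edgeInd H i j k * x k := by
  simp [edgeForm_apply, Pi.single_apply]

lemma edgeForm_single_single_self (hH : IsThreeGraph H) (i : V) (x : V → ℝ) :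
    edgeForm H (Pi.single i 1) (Pi.single i 1) x = 0 := by
  rw [edgeForm_single_single]
  exact Finset.sum_eq_zero fun k _ => by
    rw [edgeInd_of_not_isEdge fun h => (hH.ne_of_isEdge h).1 rfl, zero_mul]

lemma edgeForm_eq_sum_mul_single (H : Set (Finset V)) (x y z : V → ℝ) :
    edgeForm H x y z = ∑ i, x i * edgeForm H (Pi.single i 1) y z := by
  simp [edgeForm_apply, Pi.single_apply, Finset.mul_sum, mul_left_comm]

lemma edgeForm_transfer (hH : IsThreeGraph H) (x : V → ℝ) (i j : V) (t : ℝ) :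
    let y := x + t • (Pi.single i 1 - Pi.single j 1)
    edgeForm H y y y = edgeForm H x x x
      + 3 * t * (edgeForm H (Pi.single i 1) x x - edgeForm H (Pi.single j 1) x x)
      - 6 * t ^ 2 * edgeForm H (Pi.single i 1) (Pi.single j 1) x := by
  set u : V → ℝ := Pi.single i 1
  set v : V → ℝ := Pi.single j 1
  have huu (z : V → ℝ) : edgeForm H u u z = 0 := edgeForm_single_single_self hH i z
  have hvv (z : V → ℝ) : edgeForm H v v z = 0 := edgeForm_single_single_self hH j z
  have hvu (z : V → ℝ) : edgeForm H v u z = edgeForm H u v z := edgeForm_swap_left H v u z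
  have huvu : edgeForm H u v u = 0 := by rw [edgeForm_swap_right, huu]
  have huvv : edgeForm H u v v = 0 := by rw [← hvu, edgeForm_swap_right, hvv]
  simp only [map_add, map_sub, map_smul, LinearMap.add_apply, LinearMap.sub_apply,
    LinearMap.smul_apply, smul_eq_mul, huu, hvv, hvu, huvu, huvv,
    edgeForm_swap_right H u x, edgeForm_swap_right H v x, edgeForm_swap_right H x x u,
    edgeForm_swap_right H x x v, edgeForm_swap_left H x u, edgeForm_swap_left H x v]
  ring

lemma exists_isMaxOn_edgeForm_minimal_support (H : Set (Finset V)) [Nonempty V] :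
    ∃ x ∈ stdSimplex ℝ V, IsMaxOn (fun x => edgeForm H x x x) (stdSimplex ℝ V) x ∧
      ∀ y ∈ stdSimplex ℝ V, IsMaxOn (fun x => edgeForm H x x x) (stdSimplex ℝ V) y →
        ¬ Function.support y ⊂ Function.support x := by
  have hcont : Continuous fun x : V → ℝ => edgeForm H x x x := by
    simp only [edgeForm_apply]
    fun_prop
  obtain ⟨m, hm, hmax⟩ := (isCompact_stdSimplex ℝ V).exists_isMaxOn
    ⟨_, single_mem_stdSimplex ℝ (Classical.arbitrary V)⟩ hcont.continuousOn
  obtain ⟨x, ⟨hx, hxmax⟩, hmin⟩ := WellFounded.has_min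
    (InvImage.wf (fun x : V → ℝ => Function.support x) (wellFounded_lt (α := Set V)))
    {x | x ∈ stdSimplex ℝ V ∧ IsMaxOn (fun x => edgeForm H x x x) (stdSimplex ℝ V) x} ⟨m, hm, hmax⟩
  exact ⟨x, hx, hxmax, fun y hy hymax => hmin y ⟨hy, hymax⟩⟩

lemma transfer_mem_stdSimplex {x : V → ℝ} (hx : x ∈ stdSimplex ℝ V) {i j : V} {t : ℝ}
    (ht : 0 ≤ t) (htj : t ≤ x j) :
    x + t • (Pi.single i 1 - Pi.single j 1) ∈ stdSimplex ℝ V := by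
  refine ⟨fun k => ?_, ?_⟩
  · have hk := hx.1 k
    simp only [Pi.add_apply, Pi.smul_apply, Pi.sub_apply, Pi.single_apply, smul_eq_mul]
    split_ifs <;> subst_vars <;> linarith
  · simp [Finset.sum_add_distrib, ← Finset.mul_sum, hx.2]

end Lagrangian

section LagrangianBound

variable {V : Type*} {H : Set (Finset V)} [Fintype V] {x : V → ℝ}

lemma edgeForm_single_le_single_of_isMaxOn (hH : IsThreeGraph H) (hx : x ∈ stdSimplex ℝ V)
    (hmax : IsMaxOn (fun x => edgeForm H x x x) (stdSimplex ℝ V) x) (i : V) {j : V}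
    (hj : 0 < x j) :
    edgeForm H (Pi.single i 1) x x ≤ edgeForm H (Pi.single j 1) x x := by
  by_contra! hlt
  set a := edgeForm H (Pi.single i 1) x x - edgeForm H (Pi.single j 1) x x with ha_def
  set D := edgeForm H (Pi.single i 1) (Pi.single j 1) x
  have ha : 0 < a := sub_pos.2 hlt
  have hD : 0 ≤ D := edgeForm_nonneg (Pi.single_nonneg.2 zero_le_one)
    (Pi.single_nonneg.2 zero_le_one) hx.1
  set t := min (x j) (a / (4 * (D + 1)))
  have ht : 0 < t := by positivity
  have hmove := hmax (transfer_mem_stdSimplex hx ht.le (min_le_left _ _) (i := i))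
  simp only [Set.mem_ofPred_eq, edgeForm_transfer hH, ← ha_def] at hmove
  have hsmall : t * (4 * (D + 1)) ≤ a := (le_div_iff₀ (by positivity)).1 (min_le_right _ _)
  nlinarith [mul_pos ht ha, mul_nonneg ht.le hD]

lemma edgeForm_single_le_of_isMaxOn (hH : IsThreeGraph H) (hx : x ∈ stdSimplex ℝ V)
    (hmax : IsMaxOn (fun x => edgeForm H x x x) (stdSimplex ℝ V) x) (i : V) :
    edgeForm H (Pi.single i 1) x x ≤ edgeForm H x x x := by
  rw [edgeForm_eq_sum_mul_single H x x x]
  calc edgeForm H (Pi.single i 1) x x = ∑ j, x j * edgeForm H (Pi.single i 1) x x := by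
        rw [← Finset.sum_mul, hx.2, one_mul]
    _ ≤ ∑ j, x j * edgeForm H (Pi.single j 1) x x := Finset.sum_le_sum fun j _ => by
        rcases (hx.1 j).eq_or_lt with hj | hj
        · simp [← hj]
        · exact mul_le_mul_of_nonneg_left
            (edgeForm_single_le_single_of_isMaxOn hH hx hmax i hj) hj.le

lemma exists_isEdge_of_minimal_support (hH : IsThreeGraph H) (hx : x ∈ stdSimplex ℝ V)
    (hmax : IsMaxOn (fun x => edgeForm H x x x) (stdSimplex ℝ V) x)
    (hmin : ∀ y ∈ stdSimplex ℝ V, IsMaxOn (fun x => edgeForm H x x x) (stdSimplex ℝ V) y →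
      ¬ Function.support y ⊂ Function.support x)
    {i j : V} (hi : 0 < x i) (hj : 0 < x j) (hij : i ≠ j) : ∃ k, 0 < x k ∧ IsEdge H i j k := by
  by_contra! hcover
  have hD : edgeForm H (Pi.single i 1) (Pi.single j 1) x = 0 := by
    rw [edgeForm_single_single]
    refine Finset.sum_eq_zero fun k _ => ?_
    rcases (hx.1 k).eq_or_lt with hk | hk
    · rw [← hk, mul_zero]
    · rw [edgeInd_of_not_isEdge (hcover k hk), zero_mul]
  have hL : edgeForm H (Pi.single i 1) x x = edgeForm H (Pi.single j 1) x x :=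
    (edgeForm_single_le_single_of_isMaxOn hH hx hmax i hj).antisymm
      (edgeForm_single_le_single_of_isMaxOn hH hx hmax j hi)
  set y := x + x j • (Pi.single i 1 - Pi.single j 1 : V → ℝ) with hy_def
  have hvalue : edgeForm H y y y = edgeForm H x x x := by
    rw [hy_def, edgeForm_transfer hH, hD, hL]
    ring
  have hyj : y j = 0 := by simp [hy_def, hij.symm]
  refine hmin y (transfer_mem_stdSimplex hx hj.le le_rfl) (fun z hz => ?_) ⟨fun k hk => ?_, fun h =>
    h (Function.mem_support.2 hj.ne') hyj⟩
  · simpa only [Set.mem_ofPred_eq, hvalue] using hmax hz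
  · rw [Function.mem_support] at hk ⊢
    by_cases hki : k = i
    · exact hki ▸ hi.ne'
    by_cases hkj : k = j
    · exact hkj ▸ hj.ne'
    · simpa [hy_def, hki, hkj] using hk

lemma add_add_le_one_of_mem_stdSimplex (hx : x ∈ stdSimplex ℝ V) {i j k : V} (hij : i ≠ j)
    (hik : i ≠ k) (hjk : j ≠ k) : x i + x j + x k ≤ 1 :=
  calc x i + x j + x k = ∑ v ∈ {i, j, k}, x v := by
        rw [Finset.sum_insert (by simp [hij, hik]), Finset.sum_pair hjk, add_assoc]
    _ ≤ ∑ v, x v := Finset.sum_le_univ_sum_of_nonneg hx.1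
    _ = 1 := hx.2

lemma three_mul_edgeForm_sq_le (hH : IsThreeGraph H) (hx : x ∈ stdSimplex ℝ V) :
    3 * edgeForm H (x ^ 2) x x ≤ edgeForm H x x x := by
  have hsymm : 3 * edgeForm H (x ^ 2) x x =
      edgeForm H (x ^ 2) x x + edgeForm H x (x ^ 2) x + edgeForm H x x (x ^ 2) := by
    rw [edgeForm_swap_right H x x, edgeForm_swap_left H x (x ^ 2)]
    ring
  rw [hsymm]
  simp only [edgeForm_apply, ← Finset.sum_add_distrib, ← mul_add]
  refine Finset.sum_le_sum fun i _ => Finset.sum_le_sum fun j _ => Finset.sum_le_sum fun k _ => ?_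
  by_cases h : IsEdge H i j k
  · obtain ⟨hij, hik, hjk⟩ := hH.ne_of_isEdge h
    have hprod : 0 ≤ x i * x j * x k := mul_nonneg (mul_nonneg (hx.1 i) (hx.1 j)) (hx.1 k)
    have hsum := add_add_le_one_of_mem_stdSimplex hx hij hik hjk
    rw [edgeInd_of_isEdge h]
    simp only [Pi.pow_apply]
    nlinarith [mul_le_mul_of_nonneg_left hsum hprod]
  · simp [edgeInd_of_not_isEdge h]

lemma sum_edgeInd_mul_le_one {u : V → ℝ} (hu : ∀ k, u k ≤ 1) {i j : V}
    (hunique : ∀ k l, u k ≠ 0 → u l ≠ 0 → IsEdge H i j k → IsEdge H i j l → k = l) :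
    ∑ k, edgeInd H i j k * u k ≤ 1 := by
  by_cases hex : ∃ k, u k ≠ 0 ∧ IsEdge H i j k
  · obtain ⟨k, hk, hijk⟩ := hex
    rw [Finset.sum_eq_single k (fun l _ hlk => ?_) (by simp), edgeInd_of_isEdge hijk, one_mul]
    · exact hu k
    · by_contra! hne
      exact hlk (hunique l k (right_ne_zero_of_mul hne) hk
        (isEdge_of_edgeInd_ne_zero (left_ne_zero_of_mul hne)) hijk)
  · refine (Finset.sum_eq_zero fun k _ => ?_).trans_le zero_le_one
    by_contra! hne
    exact hex ⟨k, right_ne_zero_of_mul hne,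
      isEdge_of_edgeInd_ne_zero (left_ne_zero_of_mul hne)⟩

lemma edgeForm_indicator_support_le (hH : IsThreeGraph H) (hx : x ∈ stdSimplex ℝ V)
    (hunique : ∀ i j k l, 0 < x i → 0 < x j → 0 < x k → 0 < x l →
      IsEdge H i j k → IsEdge H i j l → k = l) :
    edgeForm H x x (fun k => if 0 < x k then 1 else 0) ≤ 1 - ∑ i, x i ^ 2 := by
  have hdeg (i j : V) : x i * x j * ∑ k, edgeInd H i j k * (if 0 < x k then 1 else 0) ≤
      x i * x j - if i = j then x i * x j else 0 := by
    split_ifs with hij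
    · subst hij
      simp [edgeInd_of_not_isEdge fun h => (hH.ne_of_isEdge h).1 rfl]
    rw [sub_zero]
    rcases (hx.1 i).eq_or_lt with hi | hi
    · simp [← hi]
    rcases (hx.1 j).eq_or_lt with hj | hj
    · simp [← hj]
    exact mul_le_of_le_one_right (mul_pos hi hj).le <|
      sum_edgeInd_mul_le_one (fun k => by split_ifs <;> norm_num) fun k l hk hl =>
        hunique i j k l hi hj (by_contra fun h => hk (if_neg h)) (by_contra fun h => hl (if_neg h))
  calc edgeForm H x x (fun k => if 0 < x k then 1 else 0)
      = ∑ i, ∑ j, x i * x j * ∑ k, edgeInd H i j k * (if 0 < x k then 1 else 0) := by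
        simp only [edgeForm_apply, Finset.mul_sum]
        exact Finset.sum_congr rfl fun i _ => Finset.sum_congr rfl fun j _ =>
          Finset.sum_congr rfl fun k _ => by ring
    _ ≤ ∑ i, ∑ j, (x i * x j - if i = j then x i * x j else 0) :=
        Finset.sum_le_sum fun i _ => Finset.sum_le_sum fun j _ => hdeg i j
    _ = 1 - ∑ i, x i ^ 2 := by
        simp [Finset.sum_sub_distrib, ← Finset.mul_sum, hx.2, sq]

/- Testing the form against `(x - c)²` supported on the support of `x` bounds it by a quadratic in
`q = ∑ x i ^ 2`; the choices `c = q` and `c = 1/3` are optimal for `q ≤ 1/3` and `q ≥ 1/3`. -/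
lemma edgeForm_le_of_unique_third_vertex (hH : IsThreeGraph H) (hx : x ∈ stdSimplex ℝ V)
    (hL : ∀ i, edgeForm H (Pi.single i 1) x x ≤ edgeForm H x x x)
    (hunique : ∀ i j k l, 0 < x i → 0 < x j → 0 < x k → 0 < x l →
      IsEdge H i j k → IsEdge H i j l → k = l) : edgeForm H x x x ≤ 2 / 9 := by
  set f := edgeForm H x x x
  set q := ∑ i, x i ^ 2
  set u : V → ℝ := fun k => if 0 < x k then 1 else 0 with hu
  have hWq : edgeForm H (x ^ 2) x x ≤ q * f := by
    rw [edgeForm_eq_sum_mul_single, Finset.sum_mul]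
    exact Finset.sum_le_sum fun i _ => mul_le_mul_of_nonneg_left (hL i) (sq_nonneg _)
  have hWf : 3 * edgeForm H (x ^ 2) x x ≤ f := three_mul_edgeForm_sq_le hH hx
  have hS : edgeForm H x x u ≤ 1 - q := edgeForm_indicator_support_le hH hx hunique
  have htest (c : ℝ) : 0 ≤ edgeForm H (x ^ 2) x x - 2 * c * f + c ^ 2 * edgeForm H x x u := by
    have hsq : (0 : V → ℝ) ≤ x ^ 2 - (2 * c) • x + c ^ 2 • u := fun k => by
      simp only [hu, Pi.zero_apply, Pi.add_apply, Pi.sub_apply, Pi.pow_apply, Pi.smul_apply,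
        smul_eq_mul]
      rcases (hx.1 k).eq_or_lt with hk | hk
      · simp [← hk]
      · rw [if_pos hk]
        nlinarith [sq_nonneg (x k - c)]
    have hform := edgeForm_nonneg (H := H) hx.1 hx.1 hsq
    rwa [map_add, map_sub, map_smul, map_smul, smul_eq_mul, smul_eq_mul,
      edgeForm_swap_right H x x (x ^ 2), edgeForm_swap_left H x (x ^ 2)] at hform
  have hq : 0 < q := by
    obtain ⟨i, hi⟩ : ∃ i, x i ≠ 0 := by
      by_contra! hzero
      simpa [hzero] using hx.2
    exact Finset.sum_pos' (fun i _ => sq_nonneg _) ⟨i, Finset.mem_univ i, by positivity⟩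
  rcases le_total q (1 / 3) with hq3 | hq3
  · have hf : f ≤ q * (1 - q) := by
      refine le_of_mul_le_mul_left ?_ hq
      nlinarith [htest q, mul_le_mul_of_nonneg_left hS (sq_nonneg q)]
    nlinarith
  · linarith [htest (1 / 3)]

theorem edgeForm_le_two_ninths (hH : IsThreeGraph H) (hK : ¬ ∃ φ, IsHomOn K4minus H φ)
    (hF : ¬ ∃ φ, IsHomOn Fstar H φ) {z : V → ℝ} (hz : z ∈ stdSimplex ℝ V) :
    edgeForm H z z z ≤ 2 / 9 := by
  have : Nonempty V := by
    by_contra hempty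
    rw [not_nonempty_iff] at hempty
    simpa using hz.2
  obtain ⟨x, hx, hmax, hmin⟩ := exists_isMaxOn_edgeForm_minimal_support H
  have hcover : ∀ i ∈ {v | 0 < x v}, ∀ j ∈ {v | 0 < x v}, i ≠ j → ∃ k ∈ {v | 0 < x v},
      IsEdge H i j k := fun i hi j hj =>
    exists_isEdge_of_minimal_support hH hx hmax hmin hi hj
  exact (hmax hz).trans (edgeForm_le_of_unique_third_vertex hH hx
    (edgeForm_single_le_of_isMaxOn hH hx hmax)
    fun i j k l => third_vertex_unique_of_cover hH hK hF hcover)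

end LagrangianBound

section Density

variable {V : Type*}

lemma triple_eq_triple_iff [DecidableEq V] {a b c x y z : V} (hab : a ≠ b) (hac : a ≠ c)
    (hbc : b ≠ c) :
    ({x, y, z} : Finset V) = {a, b, c} ↔ (x, y, z) ∈ ({(a, b, c), (a, c, b), (b, a, c), (b, c, a),
      (c, a, b), (c, b, a)} : Finset (V × V × V)) := by
  simp only [Finset.mem_insert, Finset.mem_singleton, Prod.mk.injEq]
  refine ⟨fun h => ?_, ?_⟩
  · have hx : x ∈ ({a, b, c} : Finset V) := h ▸ by simp
    have hy : y ∈ ({a, b, c} : Finset V) := h ▸ by simp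
    have hz : z ∈ ({a, b, c} : Finset V) := h ▸ by simp
    obtain ⟨hxy, hxz, hyz⟩ := Finset.card_triple_eq_three_iff.1
      (h ▸ Finset.card_triple_eq_three_iff.2 ⟨hab, hac, hbc⟩ : ({x, y, z} : Finset V).card = 3)
    simp only [Finset.mem_insert, Finset.mem_singleton] at hx hy hz
    grind
  · rintro (⟨rfl, rfl, rfl⟩ | ⟨rfl, rfl, rfl⟩ | ⟨rfl, rfl, rfl⟩ | ⟨rfl, rfl, rfl⟩ |
      ⟨rfl, rfl, rfl⟩ | ⟨rfl, rfl, rfl⟩) <;> ext v <;> simp <;> tauto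

lemma isEdge_image_equiv [DecidableEq V] (H : Set (Finset V)) (ψ : Equiv.Perm V) {x y z : V} :
    IsEdge ((fun e => e.image ψ) '' H) (ψ x) (ψ y) (ψ z) ↔ IsEdge H x y z := by
  have htriple : ({ψ x, ψ y, ψ z} : Finset V) = ({x, y, z} : Finset V).image ψ := by
    rw [Finset.image_insert, Finset.image_insert, Finset.image_singleton]
  rw [isEdge_iff, isEdge_iff, htriple]
  exact (Finset.image_injective ψ.injective).mem_set_image

lemma abs_edgeInd_sub (H H' : Set (Finset V)) (x y z : V) :
    |edgeInd H x y z - edgeInd H' x y z| = edgeInd (symmDiff H H') x y z := by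
  have hsymmDiff : IsEdge (symmDiff H H') x y z ↔
      IsEdge H x y z ∧ ¬ IsEdge H' x y z ∨ IsEdge H' x y z ∧ ¬ IsEdge H x y z := Set.mem_symmDiff
  by_cases h : IsEdge H x y z <;> by_cases h' : IsEdge H' x y z <;>
    simp [edgeInd, hsymmDiff, h, h']

variable [Fintype V]

lemma sum_edgeInd {H : Set (Finset V)} (hH : IsThreeGraph H) :
    ∑ x, ∑ y, ∑ z, edgeInd H x y z = 6 * H.ncard := by
  have hcount (e : Finset V) (he : e.card = 3) :
      (Finset.univ.filter fun p : V × V × V => ({p.1, p.2.1, p.2.2} : Finset V) = e).card = 6 := by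
    obtain ⟨a, b, c, hab, hac, hbc, rfl⟩ := Finset.card_eq_three.1 he
    simp only [triple_eq_triple_iff hab hac hbc, Prod.mk.eta, Finset.filter_univ_mem]
    simp [Finset.card_insert_of_notMem, hab, hac, hbc, hab.symm, hac.symm, hbc.symm]
  set f : V × V × V → Finset V := fun p => {p.1, p.2.1, p.2.2}
  calc ∑ x, ∑ y, ∑ z, edgeInd H x y z
      = ((Finset.univ.filter fun p => f p ∈ H.toFinset).card : ℝ) := by
        simp only [Finset.card_filter, Fintype.sum_prod_type, Nat.cast_sum, Nat.cast_ite,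
          Set.mem_toFinset, Nat.cast_one, Nat.cast_zero]
        rfl
    _ = ∑ e ∈ H.toFinset, ((Finset.univ.filter fun p => f p = e).card : ℝ) := by
        have hmaps : Set.MapsTo f (Finset.univ.filter fun p => f p ∈ H.toFinset : Finset _)
            (H.toFinset : Finset _) := fun p hp => (Finset.mem_filter.1 hp).2
        rw [Finset.card_eq_sum_card_fiberwise hmaps, Nat.cast_sum]
        refine Finset.sum_congr rfl fun e he => ?_
        rw [Finset.filter_filter]
        congr 2
        ext p
        simp only [Finset.mem_filter, Finset.mem_univ, true_and, and_iff_right_iff_imp]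
        rintro rfl
        exact he
    _ = 6 * H.ncard := by
        rw [Finset.sum_congr rfl fun e he => congrArg Nat.cast (hcount e (hH e
          (Set.mem_toFinset.1 he))), Finset.sum_const, ← Set.ncard_eq_toFinset_card', nsmul_eq_mul,
          mul_comm, Nat.cast_ofNat]

/-- The probability that three independent uniformly random vertices of `H` form an edge. -/
noncomputable def edgeDensity (H : Set (Finset V)) : ℝ := 𝔼 x, 𝔼 y, 𝔼 z, edgeInd H x y z

/-- The mean square codegree of `H`, normalised to lie in `[0, 1]`. -/
noncomputable def codegreeEnergy (H : Set (Finset V)) : ℝ := 𝔼 x, 𝔼 y, (𝔼 z, edgeInd H x y z) ^ 2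

lemma edgeDensity_eq_ncard {H : Set (Finset V)} (hH : IsThreeGraph H) :
    edgeDensity H = 6 * H.ncard / (Fintype.card V : ℝ) ^ 3 := by
  simp only [edgeDensity, Fintype.expect_eq_sum_div_card, ← Finset.sum_div, sum_edgeInd hH]
  rw [div_div, div_div, pow_three]

lemma edgeDensity_eq_edgeForm (H : Set (Finset V)) :
    edgeDensity H = edgeForm H (fun _ => (Fintype.card V : ℝ)⁻¹) (fun _ => (Fintype.card V : ℝ)⁻¹)
      (fun _ => (Fintype.card V : ℝ)⁻¹) := by
  simp only [edgeDensity, edgeForm_apply, Fintype.expect_eq_sum_div_card, div_eq_mul_inv,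
    Finset.sum_mul, mul_assoc]

lemma edgeDensity_le_two_ninths {H : Set (Finset V)} (hH : IsThreeGraph H)
    (hK : ¬ ∃ φ, IsHomOn K4minus H φ) (hF : ¬ ∃ φ, IsHomOn Fstar H φ) :
    edgeDensity H ≤ 2 / 9 := by
  cases isEmpty_or_nonempty V
  · norm_num [edgeDensity]
  rw [edgeDensity_eq_edgeForm]
  exact edgeForm_le_two_ninths hH hK hF ⟨fun _ => by positivity, by simp⟩

lemma codegreeEnergy_image_equiv [DecidableEq V] (H : Set (Finset V)) (ψ : Equiv.Perm V) :
    codegreeEnergy ((fun e => e.image ψ) '' H) = codegreeEnergy H := by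
  refine (Fintype.expect_equiv ψ _ _ fun x => Fintype.expect_equiv ψ _ _ fun y =>
    congrArg (· ^ 2) (Fintype.expect_equiv ψ _ _ fun z => ?_)).symm
  simp only [edgeInd, isEdge_image_equiv]

lemma abs_codegreeEnergy_sub_le (H H' : Set (Finset V)) :
    |codegreeEnergy H - codegreeEnergy H'| ≤ 2 * edgeDensity (symmDiff H H') := by
  have hcodeg (G : Set (Finset V)) (x y : V) :
      0 ≤ 𝔼 z, edgeInd G x y z ∧ 𝔼 z, edgeInd G x y z ≤ 1 := by
    refine ⟨Finset.expect_nonneg fun z _ => edgeInd_nonneg G x y z, ?_⟩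
    cases isEmpty_or_nonempty V
    · simp
    · exact Finset.expect_le Finset.univ_nonempty fun z _ => edgeInd_le_one G x y z
  have hsq (x y : V) : |(𝔼 z, edgeInd H x y z) ^ 2 - (𝔼 z, edgeInd H' x y z) ^ 2| ≤
      2 * 𝔼 z, edgeInd (symmDiff H H') x y z := by
    obtain ⟨h0, h1⟩ := hcodeg H x y
    obtain ⟨h0', h1'⟩ := hcodeg H' x y
    rw [sq_sub_sq, abs_mul, abs_of_nonneg (add_nonneg h0 h0'), ← Finset.expect_sub_distrib]
    refine mul_le_mul (by linarith) ((Finset.abs_expect_le _ _).trans_eq ?_) (abs_nonneg _)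
      two_pos.le
    simp only [abs_edgeInd_sub]
  simp only [codegreeEnergy, edgeDensity, ← Finset.expect_sub_distrib, Finset.mul_expect]
  refine (Finset.abs_expect_le _ _).trans (Finset.expect_le_expect fun x _ =>
    (Finset.abs_expect_le _ _).trans (Finset.expect_le_expect fun y _ => (hsq x y).trans_eq ?_))
  rw [Finset.mul_expect]

end Density

section RandomMaps

variable {V κ X : Type*} [Fintype V] [Fintype κ] [Fintype X]

lemma pow_expect_le_expect_pow [Nonempty V] {f : V → ℝ} (hf : ∀ v, 0 ≤ f v) (n : ℕ) :
    (𝔼 v, f v) ^ n ≤ 𝔼 v, f v ^ n := by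
  have hmean := Real.pow_arith_mean_le_arith_mean_pow Finset.univ (fun _ => (Fintype.card V : ℝ)⁻¹)
    f (fun _ _ => by positivity) (by simp) (fun v _ => hf v) n
  simpa only [Fintype.expect_eq_sum_div_card, div_eq_inv_mul, Finset.mul_sum] using hmean

lemma expect_pow_card (f : V → ℝ) :
    (𝔼 v, f v) ^ Fintype.card κ = 𝔼 s : κ → V, ∏ k, f (s k) := by
  rw [Fintype.expect_eq_sum_div_card, Fintype.expect_eq_sum_div_card, div_pow, Fintype.card_fun,
    Nat.cast_pow, ← Finset.card_univ, ← Finset.prod_const, Finset.prod_univ_sum,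
    Fintype.piFinset_univ]

lemma expect_fin_succ {r : ℕ} (f : (Fin (r + 1) → V) → ℝ) :
    𝔼 g, f g = 𝔼 v, 𝔼 g : Fin r → V, f (Fin.cons v g) := by
  rw [← Finset.expect_product', Finset.univ_product_univ]
  exact (Fintype.expect_equiv (Fin.consEquiv fun _ => V) _ _ fun _ => rfl).symm

lemma prod_fin_succ {r : ℕ} (f : (Fin (r + 1) → V) → ℝ) :
    ∏ g, f g = ∏ v, ∏ g : Fin r → V, f (Fin.cons v g) := by
  rw [← Fintype.prod_prod_type']
  exact (Fintype.prod_equiv (Fin.consEquiv fun _ => V) _ _ fun _ => rfl).symm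

/- Jensen's inequality in one coordinate at a time: duplicating a coordinate `card κ` times costs at
most a power `card κ`. -/
theorem pow_expect_le_expect_prod [Nonempty V] {r : ℕ} {f : (Fin r → V) → ℝ} (hf : ∀ g, 0 ≤ f g) :
    (𝔼 g, f g) ^ Fintype.card κ ^ r ≤
      𝔼 t : Fin r → κ → V, ∏ a : Fin r → κ, f fun i => t i (a i) := by
  induction r with
  | zero => simp [Subsingleton.elim _ (default : Fin 0 → V)]
  | succ r ih =>
    have hcons (s : κ → V) (t : Fin r → κ → V) (k : κ) (a : Fin r → κ) :
        (fun i => (Fin.cons s t : Fin (r + 1) → κ → V) i ((Fin.cons k a : Fin (r + 1) → κ) i)) =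
          Fin.cons (s k) fun i => t i (a i) :=
      funext fun i => Fin.cases rfl (fun _ => rfl) i
    calc (𝔼 g, f g) ^ Fintype.card κ ^ (r + 1)
        = ((𝔼 v, 𝔼 g, f (Fin.cons v g)) ^ Fintype.card κ ^ r) ^ Fintype.card κ := by
          rw [expect_fin_succ, pow_succ, pow_mul]
      _ ≤ (𝔼 v, 𝔼 t : Fin r → κ → V, ∏ a : Fin r → κ, f (Fin.cons v fun i => t i (a i)))
            ^ Fintype.card κ := by
          gcongr
          · exact pow_nonneg
              (Finset.expect_nonneg fun v _ => Finset.expect_nonneg fun g _ => hf _) _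
          · exact (pow_expect_le_expect_pow
              (fun v => Finset.expect_nonneg fun g _ => hf _) _).trans
              (Finset.expect_le_expect fun v _ => ih fun g => hf _)
      _ ≤ 𝔼 t : Fin r → κ → V,
            (𝔼 v, ∏ a : Fin r → κ, f (Fin.cons v fun i => t i (a i))) ^ Fintype.card κ := by
          rw [Finset.expect_comm]
          exact pow_expect_le_expect_pow (fun t => Finset.expect_nonneg fun v _ =>
            Finset.prod_nonneg fun a _ => hf _) _
      _ = 𝔼 t : Fin (r + 1) → κ → V, ∏ a : Fin (r + 1) → κ, f fun i => t i (a i) := by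
          simp only [expect_pow_card, expect_fin_succ (V := κ → V), prod_fin_succ (V := κ), hcons]
          rw [Finset.expect_comm]

lemma expect_update [DecidableEq X] [Nonempty V] (f : (X → V) → ℝ) (a : X) :
    𝔼 t, 𝔼 v, f (Function.update t a v) = 𝔼 t, f t := by
  have hinv : Function.Involutive fun p : (X → V) × V => (Function.update p.1 a p.2, p.1 a) :=
    fun p => by simp
  calc 𝔼 t, 𝔼 v, f (Function.update t a v)
      = 𝔼 p : (X → V) × V, f (Function.update p.1 a p.2) := by
        rw [← Finset.univ_product_univ, Finset.expect_product]
    _ = 𝔼 p : (X → V) × V, f p.1 := Fintype.expect_equiv hinv.toPerm _ _ fun _ => rfl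
    _ = 𝔼 t, f t := by
        rw [← Finset.univ_product_univ, Finset.expect_product]
        simp only [Fintype.expect_const]

lemma expect_not_injective_le [DecidableEq X] [Nonempty V] :
    𝔼 t : X → V, (if Function.Injective t then 0 else 1 : ℝ) ≤
      (Fintype.card X : ℝ) ^ 2 / Fintype.card V := by
  have hcollision {a b : X} (hab : a ≠ b) :
      𝔼 t : X → V, (if t a = t b then 1 else 0 : ℝ) = (Fintype.card V : ℝ)⁻¹ := by
    rw [← expect_update _ a]
    simp [hab.symm]
  have hunion (t : X → V) : (if Function.Injective t then 0 else 1 : ℝ) ≤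
      ∑ p : X × X, if p.1 ≠ p.2 ∧ t p.1 = t p.2 then 1 else 0 := by
    split_ifs with hinj
    · positivity
    · obtain ⟨a, b, htab, hab⟩ := Function.not_injective_iff.1 hinj
      have := Finset.single_le_sum
        (f := fun p : X × X => if p.1 ≠ p.2 ∧ t p.1 = t p.2 then (1 : ℝ) else 0)
        (fun p _ => by positivity) (Finset.mem_univ (a, b))
      simpa [hab, htab] using this
  calc 𝔼 t : X → V, (if Function.Injective t then 0 else 1 : ℝ)
      ≤ 𝔼 t : X → V, ∑ p : X × X, (if p.1 ≠ p.2 ∧ t p.1 = t p.2 then 1 else 0 : ℝ) :=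
        Finset.expect_le_expect fun t _ => hunion t
    _ = ∑ p : X × X, 𝔼 t : X → V, (if p.1 ≠ p.2 ∧ t p.1 = t p.2 then 1 else 0 : ℝ) :=
        Finset.expect_sum_comm _ _ _
    _ ≤ ∑ _p : X × X, (Fintype.card V : ℝ)⁻¹ := Finset.sum_le_sum fun p _ => by
        by_cases hp : p.1 = p.2
        · simp [hp]
        · simp [hp, hcollision hp]
    _ = (Fintype.card X : ℝ) ^ 2 / Fintype.card V := by
        simp [sq, div_eq_mul_inv]

theorem exists_injective_blowup [Nonempty V] {r : ℕ} {S : Set (Fin r → V)}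
    (hS : ((r * Fintype.card κ : ℕ) : ℝ) ^ 2 / Fintype.card V <
      (𝔼 g, (if g ∈ S then 1 else 0 : ℝ)) ^ Fintype.card κ ^ r) :
    ∃ t : Fin r → κ → V, Function.Injective (Function.uncurry t) ∧
      ∀ a : Fin r → κ, (fun i => t i (a i)) ∈ S := by
  have hinj : 𝔼 t : Fin r → κ → V, (if Function.Injective (Function.uncurry t) then 0 else 1 : ℝ) ≤
      ((r * Fintype.card κ : ℕ) : ℝ) ^ 2 / Fintype.card V := by
    have h := expect_not_injective_le (V := V) (X := Fin r × κ)
    rw [Fintype.card_prod, Fintype.card_fin] at h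
    refine (Fintype.expect_equiv (Equiv.curry (Fin r) κ V).symm _ _ fun t => ?_).trans_le h
    rfl
  obtain ⟨t, -, ht⟩ := Finset.exists_lt_of_expect_lt_expect <|
    hinj.trans_lt <| hS.trans_le <| pow_expect_le_expect_prod (κ := κ) fun g => by positivity
  have hprod : ∏ a : Fin r → κ, (if (fun i => t i (a i)) ∈ S then 1 else 0 : ℝ) =
      if ∀ a : Fin r → κ, (fun i => t i (a i)) ∈ S then 1 else 0 := by
    simp [Finset.prod_ite_zero]
  rw [hprod] at ht
  refine ⟨t, ?_⟩
  split_ifs at ht with h₁ h₂ h₃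
  all_goals first | exact ⟨h₁, h₂⟩ | linarith

end RandomMaps

section Supersaturation

variable {V W X : Type*} [Fintype V] [Fintype W] [Fintype X] {Q : Set (Finset W)}
  {H : Set (Finset V)}

lemma edgeDensity_le_one (H : Set (Finset V)) : edgeDensity H ≤ 1 := by
  cases isEmpty_or_nonempty V
  · simp [edgeDensity]
  exact Finset.expect_le Finset.univ_nonempty fun x _ => Finset.expect_le Finset.univ_nonempty
    fun y _ => Finset.expect_le Finset.univ_nonempty fun z _ => edgeInd_le_one H x y z

lemma expect_edgeInd_comp [DecidableEq X] [Nonempty V] (H : Set (Finset V)) {i j k : X}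
    (hij : i ≠ j) (hik : i ≠ k) (hjk : j ≠ k) :
    𝔼 g : X → V, edgeInd H (g i) (g j) (g k) = edgeDensity H :=
  calc 𝔼 g : X → V, edgeInd H (g i) (g j) (g k)
      = 𝔼 g : X → V, 𝔼 z, edgeInd H (g i) (g j) z := by
        rw [← expect_update _ k]
        simp [hik, hjk]
    _ = 𝔼 g : X → V, 𝔼 y, 𝔼 z, edgeInd H (g i) y z := by
        rw [← expect_update _ j]
        simp [hij]
    _ = edgeDensity H := by
        rw [← expect_update _ i]
        simp [edgeDensity]

lemma edgeDensity_le_expect_comap_add [DecidableEq X] [Nonempty V] [Nonempty X]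
    (hH : IsThreeGraph H) :
    edgeDensity H ≤ (𝔼 g : X → V, edgeDensity (comap g H)) + 3 / Fintype.card X := by
  have htriple (i j k : X) : edgeDensity H ≤ (𝔼 g : X → V, edgeInd (comap g H) i j k) +
      ((if i = j then 1 else 0) + (if i = k then 1 else 0) + if j = k then 1 else 0) := by
    have hnonneg : 0 ≤ 𝔼 g : X → V, edgeInd (comap g H) i j k :=
      Finset.expect_nonneg fun g _ => edgeInd_nonneg _ i j k
    have hle := edgeDensity_le_one H
    by_cases hne : i ≠ j ∧ i ≠ k ∧ j ≠ k
    · rw [← expect_edgeInd_comp H hne.1 hne.2.1 hne.2.2]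
      simp [edgeInd, isEdge_comap hH, hne]
    · split_ifs <;> first | linarith | tauto
  calc edgeDensity H = 𝔼 _i : X, 𝔼 _j : X, 𝔼 _k : X, edgeDensity H := by
        simp only [Fintype.expect_const]
    _ ≤ 𝔼 i : X, 𝔼 j : X, 𝔼 k : X, ((𝔼 g : X → V, edgeInd (comap g H) i j k) +
          ((if i = j then 1 else 0) + (if i = k then 1 else 0) + if j = k then 1 else 0)) :=
        Finset.expect_le_expect fun i _ => Finset.expect_le_expect fun j _ =>
          Finset.expect_le_expect fun k _ => htriple i j k
    _ = (𝔼 g : X → V, edgeDensity (comap g H)) + 3 / Fintype.card X := by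
        simp only [Finset.expect_add_distrib, edgeDensity]
        congr 1
        · simp only [Finset.expect_comm (Finset.univ : Finset X) (Finset.univ : Finset (X → V))]
        · simp only [Finset.univ_nonempty, Finset.expect_const, Finset.expect_ite_eq,
            Finset.mem_univ, if_true, Finset.card_univ, NNRat.smul_one_eq_cast, NNRat.cast_inv,
            NNRat.cast_natCast]
          ring

lemma containsCopy_of_lt_expect_isHomOn [Nonempty V] (hQ : IsThreeGraph Q) {m : ℕ} (θ : W → Fin m)
    (hθ : ((m * Fintype.card W : ℕ) : ℝ) ^ 2 / Fintype.card V <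
      (𝔼 g : Fin m → V, (if IsHomOn Q H (g ∘ θ) then 1 else 0 : ℝ)) ^ Fintype.card W ^ m) :
    ContainsCopy Q H := by
  obtain ⟨t, htinj, ht⟩ := exists_injective_blowup (κ := W) (S := {g | IsHomOn Q H (g ∘ θ)}) hθ
  refine ⟨fun v => t (θ v) v, fun v w hvw => (Prod.ext_iff.1 (@htinj (θ v, v) (θ w, w) hvw)).2,
    fun e he => ?_⟩
  have hne : e.Nonempty := Finset.card_pos.1 (by simp [hQ e he])
  have : Nonempty W := ⟨hne.choose⟩
  have hθinj : Set.InjOn θ e := by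
    refine Set.InjOn.of_comp (g := fun i => t i (Classical.arbitrary W))
      (Finset.card_image_iff.1 ?_)
    rw [hQ e he]
    exact (ht (fun _ => Classical.arbitrary W) e he).1
  have himage : e.image (fun v => t (θ v) v) =
      e.image ((fun i => t i (Function.invFunOn θ e i)) ∘ θ) :=
    Finset.image_congr fun v hv => by
      simp only [Function.comp_apply, hθinj.leftInvOn_invFunOn hv]
  exact himage ▸ (ht (Function.invFunOn θ e) e he).2

lemma expect_exists_isHomOn_comap_le [DecidableEq X] (hH : IsThreeGraph H) :
    𝔼 g : X → V, (if ∃ φ, IsHomOn Q (comap g H) φ then 1 else 0 : ℝ) ≤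
      ∑ θ : W → X, 𝔼 g : X → V, (if IsHomOn Q H (g ∘ θ) then 1 else 0 : ℝ) := by
  rw [← Finset.expect_sum_comm]
  refine Finset.expect_le_expect fun g _ => ?_
  split_ifs with h
  · obtain ⟨φ, hφ⟩ := h
    refine (if_pos ((isHomOn_comap hH g).comp hφ)).ge.trans <|
      Finset.single_le_sum (f := fun θ : W → X => (if IsHomOn Q H (g ∘ θ) then 1 else 0 : ℝ))
        (fun _ _ => by positivity) (Finset.mem_univ φ)
  · positivity

lemma edgeDensity_le_add_sum_isHomOn [Nonempty V] {π : ℝ} (hπ : 0 ≤ π) {m : ℕ} (hm : m ≠ 0)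
    (hJ : ∀ J : Set (Finset (Fin m)), IsThreeGraph J → (¬ ∃ φ, IsHomOn Q J φ) → edgeDensity J ≤ π)
    (hH : IsThreeGraph H) :
    edgeDensity H ≤ π + 3 / m +
      ∑ θ : W → Fin m, 𝔼 g : Fin m → V, (if IsHomOn Q H (g ∘ θ) then 1 else 0 : ℝ) := by
  have : NeZero m := ⟨hm⟩
  have hsample (g : Fin m → V) : edgeDensity (comap g H) ≤
      π + if ∃ φ, IsHomOn Q (comap g H) φ then 1 else 0 := by
    split_ifs with h
    · linarith [edgeDensity_le_one (comap g H)]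
    · simpa using hJ _ (isThreeGraph_comap g H) h
  have hmean := edgeDensity_le_expect_comap_add (X := Fin m) hH
  have hle := Finset.expect_le_expect (s := Finset.univ) fun g _ => hsample g
  rw [Finset.expect_add_distrib, Fintype.expect_const] at hle
  rw [Fintype.card_fin] at hmean
  linarith [expect_exists_isHomOn_comap_le (Q := Q) (X := Fin m) hH]

/- A uniformly random map `Fin m → V` samples a subgraph of density close to that of `H`. If `H`
were denser than `π + ε`, some fixed map `W → Fin m` would be a homomorphism for a positive
proportion of the samples, and a blow-up inside this set of samples gives a copy of `Q`. -/
theorem exists_edgeDensity_le_add {W : Type*} [Finite W] {Q : Set (Finset W)} (hQ : IsThreeGraph Q)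
    {π : ℝ} (hπ : 0 ≤ π)
    (hJ : ∀ m, ∀ J : Set (Finset (Fin m)), IsThreeGraph J → (¬ ∃ φ, IsHomOn Q J φ) →
      edgeDensity J ≤ π) {ε : ℝ} (hε : 0 < ε) :
    ∃ N : ℕ, ∀ n, N ≤ n → ∀ H : Set (Finset (Fin n)), IsThreeGraph H →
      ¬ ContainsCopy Q H → edgeDensity H ≤ π + ε := by
  cases nonempty_fintype W
  obtain ⟨m, hm⟩ := exists_nat_gt (6 / ε)
  have hm0 : (0 : ℝ) < m := (by positivity : 0 < 6 / ε).trans hm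
  have : NeZero m := ⟨by exact_mod_cast hm0.ne'⟩
  set p : ℝ := ε / 2 / Fintype.card (W → Fin m)
  have hp : 0 < p := by positivity
  obtain ⟨N, hN⟩ := exists_nat_gt (((m * Fintype.card W : ℕ) : ℝ) ^ 2 / p ^ Fintype.card W ^ m)
  refine ⟨N + 1, fun n hn H hH hfree => ?_⟩
  have : NeZero n := ⟨by omega⟩
  have hn0 : (0 : ℝ) < n := by exact_mod_cast NeZero.pos n
  have hrare (θ : W → Fin m) :
      𝔼 g : Fin m → Fin n, (if IsHomOn Q H (g ∘ θ) then 1 else 0 : ℝ) ≤ p := by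
    by_contra! hθ
    refine hfree (containsCopy_of_lt_expect_isHomOn hQ θ ?_)
    rw [Fintype.card_fin, div_lt_iff₀ hn0]
    calc ((m * Fintype.card W : ℕ) : ℝ) ^ 2 < p ^ Fintype.card W ^ m * N := by
          rwa [div_lt_iff₀' (by positivity)] at hN
      _ ≤ _ := by
          gcongr
          omega
  have hsum := Finset.sum_le_card_nsmul Finset.univ _ p fun θ _ => hrare θ
  rw [Finset.card_univ, nsmul_eq_mul, mul_div_cancel₀ _ (by positivity)] at hsum
  have hm' : 3 / (m : ℝ) ≤ ε / 2 := by
    rw [div_lt_iff₀ hε] at hm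
    rw [div_le_iff₀ hm0]
    linarith
  linarith [edgeDensity_le_add_sum_isHomOn (Q := Q) hπ (NeZero.ne m) (hJ m) hH]

end Supersaturation

section Extremal

lemma isThreeGraph_F : IsThreeGraph F := isThreeGraph_prodGraph K4minus Fstar

lemma edgeDensity_le_two_ninths_of_no_isHomOn_F {V : Type*} [Fintype V] {J : Set (Finset V)}
    (hJ : IsThreeGraph J) (hF : ¬ ∃ φ, IsHomOn F J φ) : edgeDensity J ≤ 2 / 9 :=
  edgeDensity_le_two_ninths hJ
    (fun ⟨_, hφ⟩ => hF ⟨_, hφ.comp (isHomOn_fst isThreeGraph_K4minus Fstar)⟩)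
    (fun ⟨_, hφ⟩ => hF ⟨_, hφ.comp (isHomOn_snd isThreeGraph_Fstar K4minus)⟩)

lemma exists_exF_le {ε : ℝ} (hε : 0 < ε) :
    ∃ N : ℕ, ∀ n, N ≤ n → (exF n : ℝ) ≤ (1 + ε) / 27 * n ^ 3 := by
  obtain ⟨N, hN⟩ := exists_edgeDensity_le_add (π := 2 / 9) isThreeGraph_F (by norm_num)
    (fun m J => edgeDensity_le_two_ninths_of_no_isHomOn_F) (show 0 < 2 / 9 * ε by positivity)
  refine ⟨N + 1, fun n hn => ?_⟩
  have hn0 : (0 : ℝ) < n := by exact_mod_cast (by omega : 0 < n)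
  refine (Nat.le_floor_iff (by positivity)).1 (csSup_le' ?_)
  rintro _ ⟨H, hH, hfree, rfl⟩
  have hdensity := hN n (by omega) H hH hfree
  rw [edgeDensity_eq_ncard hH, Fintype.card_fin, div_le_iff₀ (by positivity)] at hdensity
  exact Nat.le_floor (by linarith)

lemma exists_mul_exF_lt {ε : ℝ} (hε : 0 < ε) :
    ∃ N : ℕ, ∀ n, N ≤ n → (1 - ε) * exF n < (n : ℝ) ^ 3 / 27 := by
  obtain ⟨N, hN⟩ := exists_exF_le hε
  refine ⟨N + 1, fun n hn => ?_⟩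
  have hn0 : (0 : ℝ) < n := by exact_mod_cast (by omega : 0 < n)
  have hn3 : (0 : ℝ) < (n : ℝ) ^ 3 := by positivity
  rcases le_total 1 ε with h1 | h1
  · nlinarith [mul_nonneg (sub_nonneg.2 h1) (Nat.cast_nonneg (α := ℝ) (exF n))]
  · nlinarith [mul_le_mul_of_nonneg_left (hN n (by omega)) (sub_nonneg.2 h1),
      mul_pos (mul_pos hε hε) hn3]

end Extremal

section Pattern

/-- The first (`k = false`) or second (`k = true`) coordinate of a pair. -/
def coord (k : Bool) (v : Bool × Bool) : Bool := bif k then v.2 else v.1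

/-- The 3-graph whose blow-ups are the near-extremal examples: four base vertices `inl v` and two
apexes `inr k`, with an apex `k` joined to all pairs of base vertices that differ in the
coordinate `k`. -/
def pattern : Set (Finset ((Bool × Bool) ⊕ Bool)) :=
  {e | ∃ k v w, coord k v ≠ coord k w ∧ e = {.inr k, .inl v, .inl w}}

/-- Adjacency in `pattern` for ordered triples, by case distinction on the position of the apex. -/
def PatternAdj : (Bool × Bool) ⊕ Bool → (Bool × Bool) ⊕ Bool → (Bool × Bool) ⊕ Bool → Prop
  | .inr k, .inl v, .inl w => coord k v ≠ coord k w
  | .inl v, .inr k, .inl w => coord k v ≠ coord k w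
  | .inl v, .inl w, .inr k => coord k v ≠ coord k w
  | _, _, _ => False

lemma isThreeGraph_pattern : IsThreeGraph pattern := by
  rintro e ⟨k, v, w, hvw, rfl⟩
  exact Finset.card_triple_eq_three_iff.2 ⟨by simp, by simp,
    fun h => hvw (congrArg (coord k) (Sum.inl_injective h))⟩

lemma isEdge_pattern {a b c : (Bool × Bool) ⊕ Bool} :
    IsEdge pattern a b c ↔ PatternAdj a b c := by
  have hapex {k : Bool} {v w : Bool × Bool} (h : coord k v ≠ coord k w) :
      IsEdge pattern (.inr k) (.inl v) (.inl w) := isEdge_iff.2 ⟨k, v, w, h, rfl⟩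
  refine ⟨fun h => ?_, fun h => ?_⟩
  · obtain ⟨k, v, w, hvw, habc⟩ := isEdge_iff.1 h
    have hne : v ≠ w := ne_of_apply_ne (coord k) hvw
    rw [triple_eq_triple_iff (by simp) (by simp) (by simpa using hne)] at habc
    simp only [Finset.mem_insert, Finset.mem_singleton, Prod.mk.injEq] at habc
    rcases habc with ⟨rfl, rfl, rfl⟩ | ⟨rfl, rfl, rfl⟩ | ⟨rfl, rfl, rfl⟩ | ⟨rfl, rfl, rfl⟩ |
      ⟨rfl, rfl, rfl⟩ | ⟨rfl, rfl, rfl⟩ <;> first | exact hvw | exact hvw.symm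
  · rcases a with v | k <;> rcases b with w | l <;> rcases c with u | m <;>
      simp only [PatternAdj] at h
    · exact isEdge_rotate.2 (hapex h)
    · exact isEdge_swap_left.2 (hapex h)
    · exact hapex h

end Pattern

section NoHom

lemma bool_eq_of_ne_of_ne {a b c : Bool} (hac : a ≠ c) (hbc : b ≠ c) : a = b :=
  (Bool.eq_not_of_ne hac).trans (Bool.eq_not_of_ne hbc).symm

lemma monochromatic_link_triangle (k : Fin 7 → Bool) : ∃ x x' x'' y z w, IsEdge Fstar x y z ∧
    IsEdge Fstar x' z w ∧ IsEdge Fstar x'' y w ∧ k x = k x' ∧ k x = k x'' := by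
  by_cases h04 : k 0 = k 4
  · exact ⟨0, 4, 0, 1, 2, 3, by decide, by decide, by decide, h04, rfl⟩
  by_cases h14 : k 1 = k 4
  · exact ⟨1, 4, 1, 0, 2, 3, by decide, by decide, by decide, h14, rfl⟩
  have h01 : k 0 = k 1 := bool_eq_of_ne_of_ne h04 h14
  by_cases h02 : k 0 = k 2
  · exact ⟨0, 1, 2, 1, 2, 0, by decide, by decide, by decide, h01, h02⟩
  by_cases h03 : k 0 = k 3
  · exact ⟨0, 1, 3, 1, 3, 0, by decide, by decide, by decide, h01, h03⟩
  · exact ⟨2, 3, 4, 3, 4, 2, by decide, by decide, by decide,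
      bool_eq_of_ne_of_ne (Ne.symm h02) (Ne.symm h03),
      bool_eq_of_ne_of_ne (Ne.symm h02) (Ne.symm h04)⟩

lemma eq_one_of_exact_hitting_Fstar {u v : Fin 7 → ℕ}
    (h : ∀ x y z, IsEdge Fstar x y z → u x + v y + v z = 1) (x : Fin 7) : u x = 1 ∧ v x = 0 := by
  have hrotations {x y z : Fin 7} (hxyz : IsEdge Fstar x y z) :
      u x + v y + v z = 1 ∧ u y + v z + v x = 1 ∧ u z + v x + v y = 1 :=
    ⟨h x y z hxyz, h y z x (isEdge_rotate.2 hxyz), h z x y (isEdge_rotate.1 hxyz)⟩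
  obtain ⟨h012, h120, h201⟩ := hrotations (show IsEdge Fstar 0 1 2 by decide)
  obtain ⟨h013, -, h301⟩ := hrotations (show IsEdge Fstar 0 1 3 by decide)
  obtain ⟨h234, -, h423⟩ := hrotations (show IsEdge Fstar 2 3 4 by decide)
  obtain ⟨h045, -, h504⟩ := hrotations (show IsEdge Fstar 0 4 5 by decide)
  obtain ⟨h146, -, h614⟩ := hrotations (show IsEdge Fstar 1 4 6 by decide)
  fin_cases x <;> simp only [Fin.reduceFinMk, Fin.zero_eta, Fin.mk_one, Fin.isValue] <;> omega

lemma eq_one_of_exact_hitting_F {s : Fin 4 → Fin 7 → ℕ}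
    (h : ∀ a b c x y z, IsEdge K4minus a b c → IsEdge Fstar x y z → s a x + s b y + s c z = 1)
    (x : Fin 7) : s 0 x = 1 ∧ s 1 x = 0 ∧ s 2 x = 0 ∧ s 3 x = 0 := by
  have hrow (x : Fin 7) : s 2 x = s 1 x ∧ s 3 x = s 1 x := by
    obtain ⟨y, z, hxyz⟩ : ∃ y z, IsEdge Fstar x y z := by decide +revert
    have h1 := h 1 0 3 x y z (by decide) hxyz
    have h2 := h 2 0 3 x y z (by decide) hxyz
    have h1' := h 1 0 2 x y z (by decide) hxyz
    have h3 := h 3 0 2 x y z (by decide) hxyz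
    omega
  have hx := eq_one_of_exact_hitting_Fstar (u := s 0) (v := s 1) (fun x y z hxyz => by
    have := h 0 1 2 x y z (by decide) hxyz
    rwa [(hrow z).1] at this) x
  exact ⟨hx.1, hx.2, (hrow x).1.trans hx.2, (hrow x).2.trans hx.2⟩

lemma isRight_sum_of_isEdge_pattern {a b c : (Bool × Bool) ⊕ Bool} (h : IsEdge pattern a b c) :
    a.isRight.toNat + b.isRight.toNat + c.isRight.toNat = 1 := by
  rw [isEdge_pattern] at h
  rcases a with v | k <;> rcases b with w | l <;> rcases c with u | m <;>
    first | rfl | exact h.elim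

theorem not_isHomOn_F_pattern (φ : Fin 4 × Fin 7 → (Bool × Bool) ⊕ Bool) :
    ¬ IsHomOn F pattern φ := by
  intro hφ
  have hedge {a b c : Fin 4} {x y z : Fin 7} (habc : IsEdge K4minus a b c)
      (hxyz : IsEdge Fstar x y z) : IsEdge pattern (φ (a, x)) (φ (b, y)) (φ (c, z)) :=
    hφ.isEdge (IsEdge.prodGraph isThreeGraph_K4minus habc hxyz)
  have hs := eq_one_of_exact_hitting_F (s := fun a x => (φ (a, x)).isRight.toNat)
    fun a b c x y z habc hxyz => isRight_sum_of_isEdge_pattern (hedge habc hxyz)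
  simp only [Bool.toNat_eq_one, Bool.toNat_eq_zero, Sum.isRight_eq_false, Sum.isRight_iff,
    Sum.isLeft_iff] at hs
  choose hs0 hs1 hs2 hs3 using hs
  choose k hk using hs0
  choose p hp using hs1
  choose q hq using hs2
  choose r hr using hs3
  obtain ⟨x, x', x'', y, z, w, hxyz, hxzw, hxyw, hx', hx''⟩ := monochromatic_link_triangle k
  have hpq := hedge (show IsEdge K4minus 0 1 2 by decide) hxyz
  have hqr := hedge (show IsEdge K4minus 0 2 3 by decide) hxzw
  have hpr := hedge (show IsEdge K4minus 0 1 3 by decide) hxyw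
  rw [hk, hp, hq, isEdge_pattern, PatternAdj] at hpq
  rw [hk, hq, hr, isEdge_pattern, PatternAdj, ← hx'] at hqr
  rw [hk, hp, hr, isEdge_pattern, PatternAdj, ← hx''] at hpr
  exact hpq (bool_eq_of_ne_of_ne hpr hqr)

end NoHom

section ClassWeight

variable {V W : Type*} [Fintype V] [Fintype W]

/-- The proportion of the elements of `V` that have colour `a` in the colouring `c`. -/
noncomputable def classWeight (c : V → W) (a : W) : ℝ := 𝔼 x, if c x = a then 1 else 0

lemma expect_comp_eq_sum_classWeight (c : V → W) (f : W → ℝ) :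
    𝔼 x, f (c x) = ∑ a, classWeight c a * f a := by
  simp only [classWeight, Finset.expect_mul, ← Finset.expect_sum_comm, ite_mul, one_mul, zero_mul,
    Finset.sum_ite_eq, Finset.mem_univ, if_true]

lemma expect_expect_comp_eq_sum_classWeight (c : V → W) (f : W → W → ℝ) :
    𝔼 x, 𝔼 y, f (c x) (c y) = ∑ a, classWeight c a * ∑ b, classWeight c b * f a b := by
  simp only [← expect_comp_eq_sum_classWeight]

lemma exists_classWeight_eq {s : W → ℕ} (hs : ∑ a, s a = Fintype.card V) :
    ∃ c : V → W, ∀ a, classWeight c a = s a / Fintype.card V := by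
  let e : V ≃ Σ a, Fin (s a) := Fintype.equivOfCardEq (by simp [hs])
  refine ⟨fun x => (e x).1, fun a => ?_⟩
  calc classWeight (fun x => (e x).1) a
      = 𝔼 p : Σ a, Fin (s a), if p.1 = a then 1 else 0 := Fintype.expect_equiv e _ _ fun _ => rfl
    _ = (∑ b, ∑ _ : Fin (s b), if b = a then 1 else 0) / Fintype.card V := by
      rw [Fintype.expect_eq_sum_div_card, Fintype.sum_sigma, Fintype.card_congr e]
    _ = s a / Fintype.card V := by simp

/-- The total weight of the vertices that form an edge of `J` together with `a` and `b`. -/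
noncomputable def weightedCodegree (J : Set (Finset W)) (w : W → ℝ) (a b : W) : ℝ :=
  ∑ d, w d * edgeInd J a b d

variable {J : Set (Finset W)}

lemma expect_edgeInd_comap (hJ : IsThreeGraph J) (c : V → W) (x y : V) :
    𝔼 z, edgeInd (comap c J) x y z = weightedCodegree J (classWeight c) (c x) (c y) := by
  simp only [edgeInd, isEdge_comap hJ]
  exact expect_comp_eq_sum_classWeight c (edgeInd J (c x) (c y))

lemma edgeDensity_comap (hJ : IsThreeGraph J) (c : V → W) :
    edgeDensity (comap c J) = ∑ a, classWeight c a *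
      ∑ b, classWeight c b * weightedCodegree J (classWeight c) a b := by
  simp only [edgeDensity, expect_edgeInd_comap hJ, expect_expect_comp_eq_sum_classWeight]

lemma codegreeEnergy_comap (hJ : IsThreeGraph J) (c : V → W) :
    codegreeEnergy (comap c J) = ∑ a, classWeight c a *
      ∑ b, classWeight c b * weightedCodegree J (classWeight c) a b ^ 2 := by
  simp only [codegreeEnergy, expect_edgeInd_comap hJ]
  exact expect_expect_comp_eq_sum_classWeight c fun a b =>
    weightedCodegree J (classWeight c) a b ^ 2

end ClassWeight

section Examples

/-- The vertex weights on `pattern` used for the examples: every apex gets weight `γ`, and the base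
vertices alternate between the weights `α` and `β` around the 4-cycle. -/
def patternWeight {R : Type*} (α β γ : R) : (Bool × Bool) ⊕ Bool → R :=
  Sum.elim (fun v => if v.1 = v.2 then α else β) fun _ => γ

lemma edgeInd_pattern (a b d : (Bool × Bool) ⊕ Bool) :
    edgeInd pattern a b d = if PatternAdj a b d then 1 else 0 := by
  simp only [edgeInd, isEdge_pattern]

lemma sum_pattern {R : Type*} [AddCommMonoid R] (f : (Bool × Bool) ⊕ Bool → R) : ∑ a, f a =
    f (.inl (true, true)) + f (.inl (true, false)) +
      (f (.inl (false, true)) + f (.inl (false, false))) + (f (.inr true) + f (.inr false)) := by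
  simp only [Fintype.sum_sum_type, Fintype.sum_prod_type, Fintype.sum_bool]

lemma weightedCodegree_pattern_apex_base (α β γ : ℝ) (k : Bool) (v : Bool × Bool) :
    weightedCodegree pattern (patternWeight α β γ) (.inr k) (.inl v) = α + β := by
  obtain ⟨i, j⟩ := v
  simp only [weightedCodegree, edgeInd_pattern, sum_pattern, PatternAdj, patternWeight, coord]
  cases k <;> cases i <;> cases j <;> simp [add_comm]

lemma weightedCodegree_pattern_base_apex (α β γ : ℝ) (k : Bool) (v : Bool × Bool) :
    weightedCodegree pattern (patternWeight α β γ) (.inl v) (.inr k) = α + β := by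
  rw [← weightedCodegree_pattern_apex_base α β γ k v]
  simp only [weightedCodegree, edgeInd_swap_left pattern (.inl v)]

lemma weightedCodegree_pattern_base_base (α β γ : ℝ) (v w : Bool × Bool) :
    weightedCodegree pattern (patternWeight α β γ) (.inl v) (.inl w) =
      (if v.1 = w.1 then 0 else γ) + if v.2 = w.2 then 0 else γ := by
  simp only [weightedCodegree, edgeInd_pattern, sum_pattern, PatternAdj, patternWeight, coord]
  by_cases h₁ : v.1 = w.1 <;> by_cases h₂ : v.2 = w.2 <;> simp [h₁, h₂]

lemma weightedCodegree_pattern_apex_apex (α β γ : ℝ) (k l : Bool) :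
    weightedCodegree pattern (patternWeight α β γ) (.inr k) (.inr l) = 0 := by
  simp [weightedCodegree, edgeInd_pattern, PatternAdj]

lemma sum_comp_weightedCodegree_pattern (α β γ : ℝ) {g : ℝ → ℝ} (hg : g 0 = 0) :
    ∑ a, patternWeight α β γ a * ∑ b, patternWeight α β γ b *
        g (weightedCodegree pattern (patternWeight α β γ) a b) =
      8 * (α + β) * γ * g (α + β) + 8 * α * β * g γ + 2 * (α ^ 2 + β ^ 2) * g (γ + γ) := by
  simp only [sum_pattern, weightedCodegree_pattern_apex_base, weightedCodegree_pattern_base_apex,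
    weightedCodegree_pattern_base_base, weightedCodegree_pattern_apex_apex]
  simp only [patternWeight, Sum.elim_inl, Sum.elim_inr, reduceCtorEq, if_true, if_false, hg,
    zero_add, add_zero]
  ring

variable {V : Type*} [Fintype V] {c : V → (Bool × Bool) ⊕ Bool} {α β γ : ℝ}

lemma edgeDensity_comap_pattern (hc : classWeight c = patternWeight α β γ) :
    edgeDensity (comap c pattern) = 12 * γ * (α + β) ^ 2 := by
  rw [edgeDensity_comap isThreeGraph_pattern, hc]
  refine (sum_comp_weightedCodegree_pattern α β γ (g := id) rfl).trans ?_
  simp only [id]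
  ring

lemma codegreeEnergy_comap_pattern (hc : classWeight c = patternWeight α β γ) :
    codegreeEnergy (comap c pattern) =
      8 * γ ^ 2 * ((α + β) ^ 2 - α * β) + 8 * γ * (α + β) ^ 3 := by
  rw [codegreeEnergy_comap isThreeGraph_pattern, hc,
    sum_comp_weightedCodegree_pattern α β γ (g := (· ^ 2)) (by norm_num)]
  ring

lemma exists_classWeight_eq_patternWeight {p q r : ℕ} (hV : Fintype.card V = 2 * (p + q + r)) :
    ∃ c : V → (Bool × Bool) ⊕ Bool, classWeight c =
      patternWeight (p / Fintype.card V : ℝ) (q / Fintype.card V) (r / Fintype.card V) := by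
  obtain ⟨c, hc⟩ := exists_classWeight_eq (V := V) (s := patternWeight p q r) (by
    rw [sum_pattern, hV]
    simp only [patternWeight, Sum.elim_inl, Sum.elim_inr, reduceCtorEq, if_true, if_false]
    ring)
  refine ⟨c, funext fun a => (hc a).trans ?_⟩
  rcases a with v | _ <;> simp only [patternWeight, Sum.elim_inl, Sum.elim_inr]
  split_ifs <;> rfl

/-- The common codegree energy of the extremal examples in which the base classes have relative
sizes `j / (6 * t)` and `(2 * t - j) / (6 * t)`, and the apex classes `1 / 6`. -/
noncomputable def exampleEnergy (t j : ℕ) : ℝ := 2 / 27 - j * (2 * t - j) / (162 * t ^ 2)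

lemma one_div_le_abs_exampleEnergy_sub {t j j' : ℕ} (ht : 0 < t) (hj : j ≤ t) (hj' : j' ≤ t)
    (hne : j ≠ j') : 1 / (162 * t ^ 2) ≤ |exampleEnergy t j - exampleEnergy t j'| := by
  have hsub : exampleEnergy t j - exampleEnergy t j' =
      (((j' - j) * (2 * t - j - j') : ℤ) : ℝ) / (162 * t ^ 2) := by
    unfold exampleEnergy
    push_cast
    ring
  have hint : ((j' - j) * (2 * t - j - j') : ℤ) ≠ 0 := mul_ne_zero (by omega) (by omega)
  rw [hsub, abs_div, abs_of_pos (a := (162 * t ^ 2 : ℝ)) (by positivity)]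
  gcongr
  exact_mod_cast Int.one_le_abs hint

lemma exists_lt_abs_exampleEnergy_sub {t : ℕ} (ht : 0 < t) (E : Fin t → ℝ) :
    ∃ j ≤ t, ∀ i, 1 / (400 * t ^ 2) < |exampleEnergy t j - E i| := by
  by_contra! hclose
  choose i hi using fun j : Fin (t + 1) => hclose j j.is_le
  obtain ⟨j, j', hne, hij⟩ := Fintype.exists_ne_map_eq_of_card_lt i (by simp)
  have hgap := one_div_le_abs_exampleEnergy_sub ht j.is_le j'.is_le (Fin.val_ne_of_ne hne)
  have htriangle := abs_sub_le (exampleEnergy t j) (E (i j)) (exampleEnergy t j')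
  have hj := hi j
  have hj' := hi j'
  rw [← hij, abs_sub_comm] at hj'
  have hle : 1 / (162 * t ^ 2 : ℝ) ≤ 1 / (400 * t ^ 2) + 1 / (400 * t ^ 2) := by linarith
  field_simp at hle
  norm_num at hle

lemma exists_comap_pattern_extremal {t N j : ℕ} (ht : 0 < t) (hN : 0 < N) (hj : j ≤ 2 * t) :
    ∃ c : Fin (6 * t * N) → (Bool × Bool) ⊕ Bool,
      ((comap c pattern).ncard : ℝ) = (6 * t * N : ℕ) ^ 3 / 27 ∧
      codegreeEnergy (comap c pattern) = exampleEnergy t j := by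
  obtain ⟨k, hk⟩ := Nat.exists_eq_add_of_le hj
  have hkr : (k : ℝ) = 2 * t - j := by rw [eq_sub_iff_add_eq']; exact_mod_cast hk.symm
  have ht0 : (t : ℝ) ≠ 0 := by positivity
  have hN0 : (N : ℝ) ≠ 0 := by positivity
  obtain ⟨c, hc⟩ := exists_classWeight_eq_patternWeight (V := Fin (6 * t * N))
    (p := j * N) (q := k * N) (r := t * N) (by rw [Fintype.card_fin]; linear_combination N * 2 * hk)
  rw [Fintype.card_fin] at hc
  have hdensity := edgeDensity_comap_pattern hc
  have henergy := codegreeEnergy_comap_pattern hc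
  rw [edgeDensity_eq_ncard (isThreeGraph_comap c pattern), Fintype.card_fin] at hdensity
  push_cast [hkr] at hdensity henergy ⊢
  refine ⟨c, ?_, ?_⟩
  · field_simp at hdensity ⊢
    linarith
  · rw [henergy, exampleEnergy]
    field_simp
    ring

lemma not_containsCopy_F_comap_pattern {V : Type*} (c : V → (Bool × Bool) ⊕ Bool) :
    ¬ ContainsCopy F (comap c pattern) := fun h =>
  have ⟨_, hφ⟩ := h.exists_isHomOn isThreeGraph_F
  not_isHomOn_F_pattern _ ((isHomOn_comap isThreeGraph_pattern c).comp hφ)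

end Examples

section EditDistance

variable {V : Type*} {G H : Set (Finset V)}

lemma IsThreeGraph.symmDiff (hG : IsThreeGraph G) (hH : IsThreeGraph H) :
    IsThreeGraph (symmDiff G H) :=
  fun e he => he.elim (fun h => hG e h.1) fun h => hH e h.1

lemma IsThreeGraph.image_equiv [DecidableEq V] (hH : IsThreeGraph H) (ψ : Equiv.Perm V) :
    IsThreeGraph ((fun e => e.image ψ) '' H) := by
  rintro _ ⟨e, he, rfl⟩
  rw [Finset.card_image_of_injective e ψ.injective, hH e he]

lemma abs_codegreeEnergy_sub_le_of_ncard_le [Fintype V] [DecidableEq V] [Nonempty V]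
    (hH : IsThreeGraph H) (hG : IsThreeGraph G) {ψ : Equiv.Perm V} {δ : ℝ}
    (h : ((symmDiff ((fun e => e.image ψ) '' H) G).ncard : ℝ) ≤ δ * (Fintype.card V : ℝ) ^ 3) :
    |codegreeEnergy H - codegreeEnergy G| ≤ 12 * δ := by
  rw [← codegreeEnergy_image_equiv H ψ]
  calc |codegreeEnergy ((fun e => e.image ψ) '' H) - codegreeEnergy G|
      ≤ 2 * edgeDensity (symmDiff ((fun e => e.image ψ) '' H) G) := abs_codegreeEnergy_sub_le _ _
    _ ≤ 2 * (6 * (δ * (Fintype.card V : ℝ) ^ 3) / (Fintype.card V : ℝ) ^ 3) := by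
      rw [edgeDensity_eq_ncard ((hH.image_equiv ψ).symmDiff hG)]
      gcongr
    _ = 12 * δ := by
      field_simp
      ring

end EditDistance

/-- For every positive integer `t`, the family `{F}` is not `t`-stable; that is,
the stability number `ξ({F})` is infinite. -/
theorem xi_F_infinite : ∀ t : ℕ, 0 < t → ¬ TStableF t := by
  rintro t ht ⟨G, hG, hstable⟩
  obtain ⟨ε, hε, N₀, hN₀⟩ := hstable (1 / (4800 * t ^ 2)) (by positivity)
  obtain ⟨N₁, hN₁⟩ := exists_mul_exF_lt hε
  obtain ⟨N, hN, hN₀N, hN₁N⟩ : ∃ N, 0 < N ∧ N₀ ≤ N ∧ N₁ ≤ N := ⟨N₀ + N₁ + 1, by omega⟩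
  have hNn : N ≤ 6 * t * N := Nat.le_mul_of_pos_left N (by omega)
  have : Nonempty (Fin (6 * t * N)) := ⟨⟨0, by omega⟩⟩
  obtain ⟨j, hj, hfar⟩ :=
    exists_lt_abs_exampleEnergy_sub ht fun i => codegreeEnergy (G (6 * t * N) i)
  obtain ⟨c, hncard, henergy⟩ := exists_comap_pattern_extremal ht hN (j := j) (by omega)
  obtain ⟨i, ψ, hψ⟩ := hN₀ _ (hN₀N.trans hNn) _ (isThreeGraph_comap c pattern)
    (not_containsCopy_F_comap_pattern c) (hncard ▸ hN₁ _ (hN₁N.trans hNn))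
  have hclose := abs_codegreeEnergy_sub_le_of_ncard_le (isThreeGraph_comap c pattern) (hG _ i)
    (ψ := ψ) (δ := 1 / (4800 * t ^ 2)) (by rwa [Fintype.card_fin])
  rw [henergy] at hclose
  refine (hfar i).not_ge (hclose.trans_eq ?_)
  ring
end

section
/- The Turán density of the two-element family {K4⁻, F*} equals 2/9; that is, ex(n,{K4⁻, F*})/C(n,3) → 2/9 as n → ∞. Equivalently: for every ε > 0 there is N such that for all n ≥ N, (2/9 − ε)·C(n,3) ≤ ex(n,{K4⁻, F*}) ≤ (2/9 + ε)·C(n,3). -/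
open scoped Classical

/-- `ex(n, {K4⁻, F*})`: the maximum number of edges of an `n`-vertex 3-graph containing
no subgraph isomorphic to `K4⁻` or to `F*`. -/
noncomputable def exKF (n : ℕ) : ℕ :=
  sSup {k | ∃ H : Set (Finset (Fin n)), IsThreeGraph H ∧
    ¬ ContainsCopy K4minus H ∧ ¬ ContainsCopy Fstar H ∧ H.ncard = k}

/-! **Upper bound.** Deleting all edges through a pair of vertices of codegree between one and four,
as long as there is such a pair, costs `O(n²)` edges. Afterwards every covered pair `{a, e}` lies in
an edge `{a, e, f}` whose third vertex avoids any four prescribed vertices, so for an `F*` it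
suffices to find its edges `123`, `124`, `345` with the pairs `15` and `25` covered.

Given a weighting of the vertices, suppose that no edge inside its support contains both `u` and
`v`. Moving weight between `u` and `v` then changes the Lagrange polynomial affinely, so all of the
weight of one of them can be moved to the other without decreasing it. Repeating this shrinks the
support until all its pairs are covered, and then two edges inside the support sharing two vertices
would produce a `K4⁻` or an `F*`. The edges inside the support thus form a linear 3-graph, whose
Lagrange polynomial is at most `1/27`; evaluating at the uniform weighting gives at most `n³/27`
edges.

**Lower bound.** The balanced complete tripartite 3-graph contains neither `K4⁻` nor `F*`.
-/

section Hypergraph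

open Finset

variable {V : Type*}

/-- A set family is linear if two distinct members share at most one point; a linear 3-graph is a
partial Steiner triple system. -/
def IsLinear (H : Finset (Finset V)) : Prop :=
  (H : Set (Finset V)).Pairwise fun e f => #(e ∩ f) ≤ 1

/-- The induced hypergraph `H[S]`, consisting of the edges of `H` contained in `S`. -/
noncomputable def inducedEdges (H : Finset (Finset V)) (S : Set V) : Finset (Finset V) :=
  {e ∈ H | (e : Set V) ⊆ S}

/-- `H[S]` covers pairs: any two distinct vertices of `S` lie in a common edge of `H[S]`. -/
def CoversPairs (H : Finset (Finset V)) (S : Set V) : Prop :=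
  S.Pairwise fun u v => ∃ e ∈ inducedEdges H S, u ∈ e ∧ v ∈ e

/-- The degree of a set `p` of vertices in `H`: the number of edges containing `p`. -/
noncomputable def codegree (H : Finset (Finset V)) (p : Finset V) : ℕ :=
  #{e ∈ H | p ⊆ e}

lemma ContainsCopy.mono {α : Type*} {G : Set (Finset α)} {H H' : Set (Finset V)} (hH : H ⊆ H') :
    ContainsCopy G H → ContainsCopy G H' :=
  fun ⟨φ, hφ, hG⟩ => ⟨φ, hφ, fun e he => hH (hG e he)⟩

lemma exists_eq_triple {e : Finset V} (he : #e = 3) {a b : V} (ha : a ∈ e) (hb : b ∈ e)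
    (hab : a ≠ b) : ∃ c, e = {a, b, c} := by
  have hsub : {a, b} ⊆ e := insert_subset ha (singleton_subset_iff.2 hb)
  obtain ⟨c, hc⟩ : ∃ c, e \ {a, b} = {c} := by
    rw [← card_eq_one, card_sdiff_of_subset hsub, he, card_pair hab]
  exact ⟨c, by rw [← union_sdiff_of_subset hsub, hc, insert_union, singleton_union]⟩

lemma ne_of_card_triple {a b c : V} (h : #{a, b, c} = 3) : a ≠ b ∧ a ≠ c ∧ b ≠ c := by
  have hne (u v : V) : #{u, v} ≠ 3 := (card_le_two.trans_lt (by norm_num)).ne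
  refine ⟨?_, ?_, ?_⟩ <;> rintro rfl <;> simp [hne] at h

lemma containsCopy_K4minus {H : Set (Finset V)} (h3 : IsThreeGraph H) {a b c d : V}
    (habc : {a, b, c} ∈ H) (habd : {a, b, d} ∈ H) (hacd : {a, c, d} ∈ H) :
    ContainsCopy K4minus H := by
  obtain ⟨hab, hac, hbc⟩ := ne_of_card_triple (h3 _ habc)
  obtain ⟨-, had, hbd⟩ := ne_of_card_triple (h3 _ habd)
  obtain ⟨-, -, hcd⟩ := ne_of_card_triple (h3 _ hacd)
  refine ⟨![a, b, c, d], ?_, ?_⟩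
  · rw [← List.nodup_ofFn]
    simp [*]
  · rintro e (rfl | rfl | rfl) <;> simpa [image_insert]

lemma containsCopy_Fstar {H : Set (Finset V)} (h3 : IsThreeGraph H) {a b c d e f g : V}
    (habc : {a, b, c} ∈ H) (habd : {a, b, d} ∈ H) (hcde : {c, d, e} ∈ H) (haef : {a, e, f} ∈ H)
    (hbeg : {b, e, g} ∈ H) (hf : f ∉ ({b, c, d} : Finset V))
    (hg : g ∉ ({a, c, d, f} : Finset V)) : ContainsCopy Fstar H := by
  obtain ⟨hab, hac, hbc⟩ := ne_of_card_triple (h3 _ habc)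
  obtain ⟨-, had, hbd⟩ := ne_of_card_triple (h3 _ habd)
  obtain ⟨hcd, hce, hde⟩ := ne_of_card_triple (h3 _ hcde)
  obtain ⟨hae, haf, hef⟩ := ne_of_card_triple (h3 _ haef)
  obtain ⟨hbe, hbg, heg⟩ := ne_of_card_triple (h3 _ hbeg)
  simp only [mem_insert, mem_singleton, not_or, ← ne_eq] at hf hg
  obtain ⟨hfb, hfc, hfd⟩ := hf
  obtain ⟨hga, hgc, hgd, hgf⟩ := hg
  refine ⟨![a, b, c, d, e, f, g], ?_, ?_⟩
  · rw [← List.nodup_ofFn]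
    simp [*, hfb.symm, hfc.symm, hfd.symm, hga.symm, hgc.symm, hgd.symm, hgf.symm]
  · rintro e (rfl | rfl | rfl | rfl | rfl) <;> simpa [image_insert]

lemma exists_notMem_of_card_lt_codegree {H : Finset (Finset V)}
    (h3 : IsThreeGraph (H : Set (Finset V))) {a b : V} (hab : a ≠ b) {t : Finset V}
    (ht : #t < codegree H {a, b}) : ∃ c ∉ t, {a, b, c} ∈ H := by
  by_contra! hcon
  have hsub : {e ∈ H | {a, b} ⊆ e} ⊆ t.image fun c => {a, b, c} := by
    intro e he
    obtain ⟨heH, hpe⟩ := mem_filter.1 he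
    obtain ⟨c, rfl⟩ := exists_eq_triple (h3 e heH) (hpe (by simp)) (hpe (by simp)) hab
    exact mem_image_of_mem _ (not_imp_not.1 (hcon c) heH)
  exact ht.not_ge ((card_le_card hsub).trans card_image_le)

lemma exists_subfamily_lt_codegree (k : ℕ) (H : Finset (Finset V)) :
    ∃ G ⊆ H, #H ≤ #G + k * #H.shadow ∧ ∀ p ∈ G.shadow, k < codegree G p := by
  induction H using Finset.strongInduction with
  | H H ih =>
    by_cases hH : ∀ p ∈ H.shadow, k < codegree H p
    · exact ⟨H, Subset.rfl, Nat.le_add_right _ _, hH⟩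
    push Not at hH
    obtain ⟨p, hp, hpk⟩ := hH
    set H' := {e ∈ H | ¬ p ⊆ e}
    have hcard : codegree H p + #H' = #H := card_filter_add_card_filter_not _
    have hssub : H' ⊂ H := by
      obtain ⟨e, he, hpe⟩ := exists_subset_of_mem_shadow hp
      exact filter_ssubset.2 ⟨e, he, not_not.2 hpe⟩
    have hshadow : #H'.shadow < #H.shadow := by
      refine card_lt_card ((ssubset_iff_of_subset (shadow_mono hssub.subset)).2 ⟨p, hp, ?_⟩)
      intro hp'
      obtain ⟨e, he, hpe⟩ := exists_subset_of_mem_shadow hp'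
      exact (mem_filter.1 he).2 hpe
    obtain ⟨G, hG, hGcard, hGdeg⟩ := ih H' hssub
    exact ⟨G, hG.trans hssub.subset, by nlinarith, hGdeg⟩

lemma CoversPairs.pair_mem_shadow {H : Finset (Finset V)} {S : Set V} (hS : CoversPairs H S)
    (h3 : IsThreeGraph (H : Set (Finset V))) {u v : V} (hu : u ∈ S) (hv : v ∈ S) (huv : u ≠ v) :
    {u, v} ∈ H.shadow := by
  obtain ⟨e, he, hue, hve⟩ := hS hu hv huv
  have heH : e ∈ H := (mem_filter.1 he).1
  refine mem_shadow_iff_exists_mem_card_add_one.2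
    ⟨e, heH, insert_subset hue (singleton_subset_iff.2 hve), ?_⟩
  rw [h3 e heH, card_pair huv]

lemma containsCopy_Fstar_of_lt_codegree {H : Finset (Finset V)}
    (h3 : IsThreeGraph (H : Set (Finset V))) (hdeg : ∀ p ∈ H.shadow, 4 < codegree H p)
    {a b c d e : V} (habc : {a, b, c} ∈ H) (habd : {a, b, d} ∈ H) (hcde : {c, d, e} ∈ H)
    (hae : a ≠ e) (hbe : b ≠ e) (hae' : {a, e} ∈ H.shadow) (hbe' : {b, e} ∈ H.shadow) :
    ContainsCopy Fstar (H : Set (Finset V)) := by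
  obtain ⟨f, hf, haef⟩ := exists_notMem_of_card_lt_codegree (t := {b, c, d}) h3 hae
    (card_le_three.trans_lt ((by norm_num : 3 < 4).trans (hdeg _ hae')))
  obtain ⟨g, hg, hbeg⟩ := exists_notMem_of_card_lt_codegree (t := {a, c, d, f}) h3 hbe
    (card_le_four.trans_lt (hdeg _ hbe'))
  exact containsCopy_Fstar h3 habc habd hcde haef hbeg hf hg

theorem isLinear_inducedEdges {H : Finset (Finset V)} (h3 : IsThreeGraph (H : Set (Finset V)))
    (hK : ¬ ContainsCopy K4minus (H : Set (Finset V)))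
    (hF : ¬ ContainsCopy Fstar (H : Set (Finset V)))
    (hdeg : ∀ p ∈ H.shadow, 4 < codegree H p) {S : Set V} (hS : CoversPairs H S) :
    IsLinear (inducedEdges H S) := by
  intro e he f hf hef
  by_contra! hinter
  obtain ⟨heH, heS⟩ := mem_filter.1 he
  obtain ⟨hfH, hfS⟩ := mem_filter.1 hf
  obtain ⟨a, ha, b, hb, hab⟩ := one_lt_card.1 hinter
  rw [mem_inter] at ha hb
  obtain ⟨c, rfl⟩ := exists_eq_triple (h3 e heH) ha.1 hb.1 hab
  obtain ⟨d, rfl⟩ := exists_eq_triple (h3 f hfH) ha.2 hb.2 hab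
  have hcd : c ≠ d := by rintro rfl; exact hef rfl
  obtain ⟨g, hg, hcg, hdg⟩ := hS (heS (by simp : c ∈ _)) (hfS (by simp : d ∈ _)) hcd
  obtain ⟨hgH, hgS⟩ := mem_filter.1 hg
  obtain ⟨x, rfl⟩ := exists_eq_triple (h3 g hgH) hcg hdg hcd
  have hxS : x ∈ S := hgS (by simp)
  rcases eq_or_ne a x with rfl | hax
  · have hacd : {a, c, d} ∈ H := by convert hgH using 1; grind
    exact hK (containsCopy_K4minus h3 heH hfH hacd)
  rcases eq_or_ne b x with rfl | hbx
  · have hbac : {b, a, c} ∈ H := by rwa [insert_comm]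
    have hbad : {b, a, d} ∈ H := by rwa [insert_comm]
    have hbcd : {b, c, d} ∈ H := by convert hgH using 1; grind
    exact hK (containsCopy_K4minus h3 hbac hbad hbcd)
  exact hF (containsCopy_Fstar_of_lt_codegree h3 hdeg heH hfH hgH hax hbx
    (hS.pair_mem_shadow h3 (heS (by simp)) hxS hax)
    (hS.pair_mem_shadow h3 (heS (by simp)) hxS hbx))

end Hypergraph

section Lagrangian

open Finset Function

variable {V : Type*}

/-- The Lagrange polynomial `∑ₑ ∏_{v ∈ e} x v` of a hypergraph `H`, evaluated at the weighting
`x` of the vertices. -/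
noncomputable def lagrangePolynomial (H : Finset (Finset V)) (x : V → ℝ) : ℝ :=
  ∑ e ∈ H, ∏ v ∈ e, x v

lemma lagrangePolynomial_inducedEdges_support (H : Finset (Finset V)) (x : V → ℝ) :
    lagrangePolynomial (inducedEdges H (support x)) x = lagrangePolynomial H x := by
  refine sum_filter_of_ne fun e _ hne v hv => ?_
  exact (prod_ne_zero_iff.1 hne) v hv

lemma lagrangePolynomial_const {H : Finset (Finset V)} (h3 : IsThreeGraph (H : Set (Finset V)))
    (c : ℝ) : lagrangePolynomial H (fun _ => c) = #H * c ^ 3 := by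
  have hterm : ∀ e ∈ H, ∏ _v ∈ e, c = c ^ 3 := fun e he => by rw [prod_const, h3 e he]
  rw [lagrangePolynomial, sum_congr rfl hterm, sum_const, nsmul_eq_mul]

/-- The weighting obtained from `x` by moving all the weight of `u` to `v`. -/
noncomputable def transferWeight (x : V → ℝ) (u v : V) : V → ℝ :=
  update (update x u 0) v (x u + x v)

section Transfer

variable {x : V → ℝ} {u v : V}

lemma transferWeight_self (huv : u ≠ v) : transferWeight x u v u = 0 := by
  rw [transferWeight, update_of_ne huv, update_self]

lemma support_transferWeight_ssubset (huv : u ≠ v) (hu : x u ≠ 0) (hv : x v ≠ 0) :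
    support (transferWeight x u v) ⊂ support x := by
  refine (Set.ssubset_iff_of_subset fun w hw => ?_).2
    ⟨u, hu, notMem_support.2 (transferWeight_self huv)⟩
  by_cases hwv : w = v
  · exact hwv ▸ hv
  by_cases hwu : w = u
  · exact hwu ▸ hu
  rwa [mem_support, transferWeight, update_of_ne hwv, update_of_ne hwu] at hw

lemma transferWeight_mem_stdSimplex [Fintype V] (huv : u ≠ v) (hx : x ∈ stdSimplex ℝ V) :
    transferWeight x u v ∈ stdSimplex ℝ V := by
  refine ⟨fun w => ?_, ?_⟩
  · by_cases hwv : w = v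
    · rw [hwv, transferWeight, update_self]
      exact add_nonneg (hx.1 u) (hx.1 v)
    rw [transferWeight, update_of_ne hwv]
    by_cases hwu : w = u
    · rw [hwu, update_self]
    rw [update_of_ne hwu]
    exact hx.1 w
  · rw [transferWeight, sum_update_of_mem (mem_univ v), sum_update_of_mem (by simpa using huv),
      zero_add, add_comm (x u), add_assoc, ← hx.2,
      ← add_sum_erase _ x (mem_univ v), sdiff_singleton_eq_erase, sdiff_singleton_eq_erase,
      ← add_sum_erase _ x (mem_erase.2 ⟨huv, mem_univ u⟩)]

lemma mul_prod_transferWeight {e : Finset V} (hu : u ∉ e) (hv : v ∈ e) :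
    x v * ∏ w ∈ e, transferWeight x u v w = (x u + x v) * ∏ w ∈ e, x w := by
  rw [transferWeight, prod_update_of_mem hv, prod_update_of_notMem (by simp [hu]),
    sdiff_singleton_eq_erase, ← mul_prod_erase e x hv]
  ring

lemma prod_transferWeight_of_mem (huv : u ≠ v) {e : Finset V} (hu : u ∈ e) :
    ∏ w ∈ e, transferWeight x u v w = 0 :=
  prod_eq_zero hu (transferWeight_self huv)

lemma prod_transferWeight_of_notMem {e : Finset V} (hu : u ∉ e) (hv : v ∉ e) :
    ∏ w ∈ e, transferWeight x u v w = ∏ w ∈ e, x w := by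
  rw [transferWeight, prod_update_of_notMem hv, prod_update_of_notMem hu]

/-- As `x` is the convex combination of the two transfers with weights proportional to `x v` and
`x u`, this says that the Lagrange polynomial is affine on the segment joining them. -/
lemma lagrangePolynomial_transferWeight {H : Finset (Finset V)} (huv : u ≠ v)
    (hH : ∀ e ∈ inducedEdges H (support x), u ∈ e → v ∉ e) :
    x v * lagrangePolynomial H (transferWeight x u v) +
      x u * lagrangePolynomial H (transferWeight x v u) =
        (x u + x v) * lagrangePolynomial H x := by
  simp only [lagrangePolynomial, mul_sum, ← sum_add_distrib]
  refine sum_congr rfl fun e he => ?_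
  by_cases hu : u ∈ e <;> by_cases hv : v ∈ e
  · have hzero : ∏ w ∈ e, x w = 0 := by
      by_contra hne
      exact hH e (mem_filter.2 ⟨he, fun w hw => prod_ne_zero_iff.1 hne w hw⟩) hu hv
    rw [prod_transferWeight_of_mem huv hu, prod_transferWeight_of_mem huv.symm hv, hzero]
    ring
  · rw [prod_transferWeight_of_mem huv hu, mul_prod_transferWeight hv hu]
    ring
  · rw [prod_transferWeight_of_mem huv.symm hv, mul_prod_transferWeight hu hv]
    ring
  · rw [prod_transferWeight_of_notMem hu hv, prod_transferWeight_of_notMem hv hu]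
    ring

end Transfer

theorem exists_lagrangePolynomial_le_and_coversPairs [Fintype V] (H : Finset (Finset V))
    {x : V → ℝ} (hx : x ∈ stdSimplex ℝ V) : ∃ y ∈ stdSimplex ℝ V,
      lagrangePolynomial H x ≤ lagrangePolynomial H y ∧ CoversPairs H (support y) := by
  induction hn : (support x).ncard using Nat.strong_induction_on generalizing x with
  | h n ih =>
    by_cases hcov : CoversPairs H (support x)
    · exact ⟨x, hx, le_rfl, hcov⟩
    have hmove {u v : V} (hu : x u ≠ 0) (hv : x v ≠ 0) (huv : u ≠ v)
        (hle : lagrangePolynomial H x ≤ lagrangePolynomial H (transferWeight x u v)) :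
        ∃ y ∈ stdSimplex ℝ V,
          lagrangePolynomial H x ≤ lagrangePolynomial H y ∧ CoversPairs H (support y) := by
      have hcard := Set.ncard_lt_ncard (support_transferWeight_ssubset huv hu hv)
      obtain ⟨y, hy, hxy, hycov⟩ :=
        ih _ (hn ▸ hcard) (transferWeight_mem_stdSimplex huv hx) rfl
      exact ⟨y, hy, hle.trans hxy, hycov⟩
    simp only [CoversPairs, Set.Pairwise, not_forall, not_exists, not_and] at hcov
    obtain ⟨u, hu, v, hv, huv, huncov⟩ := hcov
    have hxu : 0 < x u := (hx.1 u).lt_of_ne' hu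
    have hxv : 0 < x v := (hx.1 v).lt_of_ne' hv
    have haffine := lagrangePolynomial_transferWeight huv huncov
    rcases le_or_gt (lagrangePolynomial H x) (lagrangePolynomial H (transferWeight x u v))
      with hle | hlt
    · exact hmove hu hv huv hle
    · exact hmove hv hu huv.symm (by nlinarith)

end Lagrangian

section LinearThreeGraph

open Finset

variable {V : Type*}

lemma sum_offDiag_mul {R : Type*} [CommRing R] (s : Finset V) (x : V → R) :
    ∑ p ∈ s.offDiag, x p.1 * x p.2 = (∑ v ∈ s, x v) ^ 2 - ∑ v ∈ s, x v ^ 2 := by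
  rw [eq_sub_iff_add_eq', sq, sum_mul_sum, ← sum_product', ← diag_union_offDiag,
    sum_union (disjoint_diag_offDiag s), sum_diag]
  simp only [sq]

lemma IsLinear.pairwiseDisjoint_offDiag {H : Finset (Finset V)} (hH : IsLinear H) :
    (H : Set (Finset V)).PairwiseDisjoint offDiag := by
  intro e he f hf hef
  refine disjoint_left.2 fun p hpe hpf => ?_
  rw [mem_offDiag] at hpe hpf
  exact hpe.2.2 (card_le_one.1 (hH he hf hef) _ (mem_inter.2 ⟨hpe.1, hpf.1⟩) _
    (mem_inter.2 ⟨hpe.2.1, hpf.2.1⟩))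

lemma IsLinear.sum_sum_offDiag_le [Fintype V] {H : Finset (Finset V)} (hH : IsLinear H)
    {x : V → ℝ} (hx : x ∈ stdSimplex ℝ V) :
    ∑ e ∈ H, ∑ p ∈ e.offDiag, x p.1 * x p.2 ≤ 1 - ∑ v, x v ^ 2 := by
  rw [← sum_biUnion hH.pairwiseDisjoint_offDiag, ← one_pow 2, ← hx.2, ← sum_offDiag_mul]
  refine sum_le_sum_of_subset_of_nonneg (fun p hp => ?_) fun p _ _ =>
    mul_nonneg (hx.1 p.1) (hx.1 p.2)
  obtain ⟨e, -, hpe⟩ := mem_biUnion.1 hp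
  exact offDiag_mono (subset_univ e) hpe

lemma prod_le_sum_mul_sum_offDiag {e : Finset V} (he : #e = 3) {x : V → ℝ} (hx : ∀ v, 0 ≤ x v) :
    18 * ∏ v ∈ e, x v ≤ (∑ v ∈ e, x v) * ∑ p ∈ e.offDiag, x p.1 * x p.2 := by
  obtain ⟨a, b, c, hab, hac, hbc, rfl⟩ := card_eq_three.1 he
  rw [sum_offDiag_mul, prod_insert (by simp [hab, hac]), prod_pair hbc,
    sum_insert (by simp [hab, hac]), sum_pair hbc, sum_insert (by simp [hab, hac]), sum_pair hbc]
  -- This is `(a + b + c)(ab + bc + ca) ≥ 9abc`, doubled because the pairs are ordered.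
  nlinarith [mul_nonneg (hx a) (sq_nonneg (x b - x c)), mul_nonneg (hx b) (sq_nonneg (x a - x c)),
    mul_nonneg (hx c) (sq_nonneg (x a - x b))]

/-- Let `s` be the largest weight of an edge. Each edge product is at most `s / 18` times its
ordered pair sum, the pair sums add up to at most `1 - ∑ x² ≤ 1 - s² / 3`, and
`s (1 - s² / 3) / 18 ≤ 1 / 27`. -/
theorem IsLinear.lagrangePolynomial_le [Fintype V] {H : Finset (Finset V)} (hH : IsLinear H)
    (h3 : IsThreeGraph (H : Set (Finset V))) {x : V → ℝ} (hx : x ∈ stdSimplex ℝ V) :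
    lagrangePolynomial H x ≤ 1 / 27 := by
  rcases H.eq_empty_or_nonempty with rfl | hne
  · norm_num [lagrangePolynomial]
  obtain ⟨e₀, he₀, hmax⟩ := H.exists_max_image (fun e => ∑ v ∈ e, x v) hne
  set s := ∑ v ∈ e₀, x v
  have hs : 0 ≤ s := sum_nonneg fun v _ => hx.1 v
  have hsq : s ^ 2 / 3 ≤ ∑ v, x v ^ 2 := by
    have hcauchy : s ^ 2 ≤ #e₀ * ∑ v ∈ e₀, x v ^ 2 := sq_sum_le_card_mul_sum_sq
    have hsub : ∑ v ∈ e₀, x v ^ 2 ≤ ∑ v, x v ^ 2 :=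
      sum_le_univ_sum_of_nonneg fun v => sq_nonneg (x v)
    rw [h3 e₀ he₀, Nat.cast_ofNat] at hcauchy
    linarith
  have hedge : ∀ e ∈ H, ∏ v ∈ e, x v ≤ s / 18 * ∑ p ∈ e.offDiag, x p.1 * x p.2 := by
    intro e he
    have hpairs : 0 ≤ ∑ p ∈ e.offDiag, x p.1 * x p.2 :=
      sum_nonneg fun p _ => mul_nonneg (hx.1 p.1) (hx.1 p.2)
    linarith [prod_le_sum_mul_sum_offDiag (h3 e he) hx.1,
      mul_le_mul_of_nonneg_right (hmax e he) hpairs]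
  calc lagrangePolynomial H x
      ≤ ∑ e ∈ H, s / 18 * ∑ p ∈ e.offDiag, x p.1 * x p.2 := sum_le_sum hedge
    _ = s / 18 * ∑ e ∈ H, ∑ p ∈ e.offDiag, x p.1 * x p.2 := (mul_sum ..).symm
    _ ≤ s / 18 * (1 - s ^ 2 / 3) := by
        gcongr
        linarith [hH.sum_sum_offDiag_le hx]
    _ ≤ 1 / 27 := by nlinarith [mul_nonneg (sq_nonneg (s - 1)) (by linarith : 0 ≤ s + 2)]

end LinearThreeGraph

section UpperBound

open Finset

variable {V : Type*} [Fintype V]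

theorem card_le_of_lt_codegree {H : Finset (Finset V)} (h3 : IsThreeGraph (H : Set (Finset V)))
    (hK : ¬ ContainsCopy K4minus (H : Set (Finset V)))
    (hF : ¬ ContainsCopy Fstar (H : Set (Finset V)))
    (hdeg : ∀ p ∈ H.shadow, 4 < codegree H p) :
    (#H : ℝ) ≤ (Fintype.card V : ℝ) ^ 3 / 27 := by
  rcases isEmpty_or_nonempty V with hV | hV
  · have hempty : H = ∅ := eq_empty_of_forall_notMem fun e he => by
      simpa [eq_empty_of_isEmpty e] using h3 e he
    simp [hempty]
  set n : ℝ := (Fintype.card V : ℝ)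
  have hn : 0 < n := Nat.cast_pos.2 Fintype.card_pos
  have huniform : (fun _ : V => n⁻¹) ∈ stdSimplex ℝ V :=
    ⟨fun _ => inv_nonneg.2 hn.le, by simp [n]⟩
  obtain ⟨y, hy, hle, hcov⟩ := exists_lagrangePolynomial_le_and_coversPairs H huniform
  have hlin : IsLinear (inducedEdges H (Function.support y)) :=
    isLinear_inducedEdges h3 hK hF hdeg hcov
  have hbound : lagrangePolynomial H y ≤ 1 / 27 := by
    rw [← lagrangePolynomial_inducedEdges_support]
    exact hlin.lagrangePolynomial_le (fun e he => h3 e (filter_subset _ _ he)) hy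
  have hdensity : #H * n⁻¹ ^ 3 ≤ 1 / 27 := by
    rw [← lagrangePolynomial_const h3]
    exact hle.trans hbound
  rwa [inv_pow, ← div_eq_mul_inv, div_le_iff₀ (pow_pos hn 3), one_div_mul_eq_div] at hdensity

theorem ncard_le_of_not_containsCopy {H : Set (Finset V)} (h3 : IsThreeGraph H)
    (hK : ¬ ContainsCopy K4minus H) (hF : ¬ ContainsCopy Fstar H) :
    (H.ncard : ℝ) ≤ (Fintype.card V : ℝ) ^ 3 / 27 + 4 * (Fintype.card V).choose 2 := by
  obtain ⟨G, hG, hcard, hdeg⟩ := exists_subfamily_lt_codegree 4 H.toFinset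
  have hGH : (G : Set (Finset V)) ⊆ H := fun e he => Set.mem_toFinset.1 (hG he)
  have hmain : (#G : ℝ) ≤ (Fintype.card V : ℝ) ^ 3 / 27 :=
    card_le_of_lt_codegree (fun e he => h3 e (hGH he)) (mt (.mono hGH) hK) (mt (.mono hGH) hF) hdeg
  have hsized : (H.toFinset : Set (Finset V)).Sized 3 := fun e he => h3 e (by simpa using he)
  have hshadow : #H.toFinset.shadow ≤ (Fintype.card V).choose 2 := hsized.shadow.card_le
  have hncard : H.ncard ≤ #G + 4 * (Fintype.card V).choose 2 := by
    rw [Set.ncard_eq_toFinset_card']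
    lia
  calc (H.ncard : ℝ) ≤ #G + 4 * (Fintype.card V).choose 2 := mod_cast hncard
    _ ≤ (Fintype.card V : ℝ) ^ 3 / 27 + 4 * (Fintype.card V).choose 2 := by gcongr

end UpperBound

section LowerBound

open Finset

variable {V : Type*}

/-- The complete tripartite 3-graph whose parts are the color classes of `κ`. -/
def completeTripartite (κ : V → Fin 3) : Set (Finset V) :=
  {e | #e = 3 ∧ e.image κ = univ}

/-- In a 3-coloring with rainbow edges, `{a, b, c}` and `{a, b, d}` force `c` and `d` to have the
same color. -/
lemma not_containsCopy_completeTripartite {α : Type*} [DecidableEq α] {G : Set (Finset α)}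
    {a b c d : α} {e : Finset α} (habc : {a, b, c} ∈ G) (habd : {a, b, d} ∈ G) (he : e ∈ G)
    (hc : c ∈ e) (hd : d ∈ e) (hcd : c ≠ d) (κ : V → Fin 3) :
    ¬ ContainsCopy G (completeTripartite κ) := by
  rintro ⟨φ, hφ, hG⟩
  have third_color : ∀ p q r s : Fin 3,
      ({p, q, r} : Finset (Fin 3)) = univ → ({p, q, s} : Finset (Fin 3)) = univ → r = s := by
    decide
  have hκ : κ (φ c) = κ (φ d) := by
    have hc' := (hG _ habc).2
    have hd' := (hG _ habd).2
    simp only [image_insert, image_singleton] at hc' hd'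
    exact third_color _ _ _ _ hc' hd'
  obtain ⟨hcard, himage⟩ := hG e he
  have hinj : Set.InjOn κ (e.image φ) := card_image_iff.1 (by rw [himage, hcard]; rfl)
  exact hcd (hφ (hinj (mem_image_of_mem φ hc) (mem_image_of_mem φ hd) hκ))

lemma not_containsCopy_K4minus_completeTripartite (κ : V → Fin 3) :
    ¬ ContainsCopy K4minus (completeTripartite κ) :=
  not_containsCopy_completeTripartite (a := 0) (b := 1) (c := 2) (d := 3) (e := {0, 2, 3})
    (by simp [K4minus]) (by simp [K4minus]) (by simp [K4minus]) (by simp) (by simp) (by simp) κ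

lemma not_containsCopy_Fstar_completeTripartite (κ : V → Fin 3) :
    ¬ ContainsCopy Fstar (completeTripartite κ) :=
  not_containsCopy_completeTripartite (a := 0) (b := 1) (c := 2) (d := 3) (e := {2, 3, 4})
    (by simp [Fstar]) (by simp [Fstar]) (by simp [Fstar]) (by simp) (by simp) (by simp) κ

lemma prod_card_fiber_le_ncard_completeTripartite [Fintype V] (κ : V → Fin 3) :
    ∏ i, #{v | κ v = i} ≤ (completeTripartite κ).ncard := by
  let T : Finset (Fin 3 → V) := Fintype.piFinset fun i => {v | κ v = i}
  have hT {f} (hf : f ∈ T) (i : Fin 3) : κ (f i) = i := by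
    simpa using Fintype.mem_piFinset.1 hf i
  rw [← Fintype.card_piFinset, ← Set.ncard_coe_finset]
  refine Set.ncard_le_ncard_of_injOn (univ.image ·) (fun f hf => ⟨?_, ?_⟩) ?_
  · rw [card_image_of_injective _ (Function.LeftInverse.injective (hT hf)), card_univ,
      Fintype.card_fin]
  · rw [image_image]
    exact image_univ_of_surjective fun i => ⟨i, hT hf i⟩
  · intro f hf g hg hfg
    funext i
    have hi : f i ∈ univ.image g := (congrArg (f i ∈ ·) hfg).mp (mem_image_of_mem f (mem_univ i))
    obtain ⟨j, -, hj⟩ := mem_image.1 hi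
    have hij : j = i := by rw [← hT hg j, hj, hT hf i]
    rw [← hj, hij]

/-- The balanced 3-coloring of `Fin n` by residues modulo 3. -/
def residueColoring (n : ℕ) (v : Fin n) : Fin 3 := Fin.ofNat 3 v

lemma div_three_le_card_residueColoring_fiber (n : ℕ) (i : Fin 3) :
    n / 3 ≤ #{v | residueColoring n v = i} := by
  rw [← card_range (n / 3)]
  refine card_le_card_of_surjOn (fun v : Fin n => (v : ℕ) / 3) fun k hk => ?_
  have hk : k < n / 3 := by simpa using hk
  refine ⟨⟨3 * k + i, by lia⟩, ?_, ?_⟩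
  · simp [residueColoring, Fin.ext_iff, Nat.mod_eq_of_lt i.isLt]
  · simp only
    lia

end LowerBound

section ExtremalNumber

open Finset

lemma le_exKF {n : ℕ} {H : Set (Finset (Fin n))} (h3 : IsThreeGraph H)
    (hK : ¬ ContainsCopy K4minus H) (hF : ¬ ContainsCopy Fstar H) : H.ncard ≤ exKF n := by
  refine le_csSup ⟨Nat.card (Finset (Fin n)), ?_⟩ ⟨H, h3, hK, hF, rfl⟩
  rintro _ ⟨G, -, -, -, rfl⟩
  exact Set.ncard_le_card G

theorem exKF_le (n : ℕ) : (exKF n : ℝ) ≤ (n : ℝ) ^ 3 / 27 + 4 * n.choose 2 := by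
  rw [← Nat.le_floor_iff (by positivity)]
  refine csSup_le' ?_
  rintro _ ⟨H, h3, hK, hF, rfl⟩
  refine Nat.le_floor ?_
  simpa only [Fintype.card_fin] using ncard_le_of_not_containsCopy h3 hK hF

theorem div_three_pow_three_le_exKF (n : ℕ) : (n / 3) ^ 3 ≤ exKF n := by
  let κ := residueColoring n
  calc (n / 3) ^ 3 = ∏ _i : Fin 3, n / 3 := by simp
    _ ≤ ∏ i, #{v | κ v = i} :=
      prod_le_prod' fun i _ => div_three_le_card_residueColoring_fiber n i
    _ ≤ (completeTripartite κ).ncard := prod_card_fiber_le_ncard_completeTripartite κ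
    _ ≤ exKF n := le_exKF (fun _ he => he.1) (not_containsCopy_K4minus_completeTripartite κ)
      (not_containsCopy_Fstar_completeTripartite κ)

lemma cast_choose_three (n : ℕ) : (n.choose 3 : ℝ) = n * (n - 1) * (n - 2) / 6 := by
  rw [Nat.cast_choose_eq_descPochhammer_div]
  simp [descPochhammer_succ_right, Nat.factorial]

lemma cast_choose_three_le (n : ℕ) : (n.choose 3 : ℝ) ≤ (n : ℝ) ^ 3 / 6 := by
  simpa [Nat.factorial] using Nat.choose_le_pow_div (α := ℝ) 3 n

lemma le_cast_choose_three (n : ℕ) : (n : ℝ) ^ 3 / 6 - (n : ℝ) ^ 2 / 2 ≤ n.choose 3 := by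
  rw [cast_choose_three]
  linarith [n.cast_nonneg (α := ℝ)]

theorem abs_exKF_sub_le (n : ℕ) :
    |(exKF n : ℝ) - 2 / 9 * n.choose 3| ≤ 3 * (n : ℝ) ^ 2 := by
  rw [abs_le]
  constructor
  · have hfloor : ((n : ℝ) - 2) / 3 ≤ (n / 3 : ℕ) := by
      have : (n : ℝ) ≤ 3 * (n / 3 : ℕ) + 2 := mod_cast (by lia : n ≤ 3 * (n / 3) + 2)
      linarith
    have hpow : (((n : ℝ) - 2) / 3) ^ 3 ≤ (n / 3 : ℕ) ^ 3 := Odd.pow_le_pow (by decide) |>.2 hfloor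
    have hlower : ((n / 3 : ℕ) : ℝ) ^ 3 ≤ exKF n := mod_cast div_three_pow_three_le_exKF n
    nlinarith [cast_choose_three_le n]
  · have hchoose : (n.choose 2 : ℝ) ≤ (n : ℝ) ^ 2 / 2 := by
      simpa using Nat.choose_le_pow_div (α := ℝ) 2 n
    linarith [exKF_le n, le_cast_choose_three n, sq_nonneg (n : ℝ)]

end ExtremalNumber

/-- The Turán density of the family `{K4⁻, F*}` equals `2/9`. -/
theorem turan_density_K4minus_Fstar :
    ∀ ε : ℝ, 0 < ε → ∃ N : ℕ, ∀ n : ℕ, N ≤ n →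
      (2 / 9 - ε) * (n.choose 3 : ℝ) ≤ (exKF n : ℝ) ∧
        (exKF n : ℝ) ≤ (2 / 9 + ε) * (n.choose 3 : ℝ) := by
  intro ε hε
  obtain ⟨N, hN⟩ := exists_nat_ge (18 / ε + 3)
  refine ⟨N, fun n hn => ?_⟩
  have hεn : 18 ≤ ε * (n - 3) := by
    have hNn : (N : ℝ) ≤ n := mod_cast hn
    rw [← div_le_iff₀' hε]
    linarith
  have herror : 3 * (n : ℝ) ^ 2 ≤ ε * n.choose 3 :=
    calc 3 * (n : ℝ) ^ 2 = 18 * (n : ℝ) ^ 2 / 6 := by ring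
      _ ≤ ε * (n - 3) * (n : ℝ) ^ 2 / 6 := by gcongr
      _ = ε * ((n : ℝ) ^ 3 / 6 - (n : ℝ) ^ 2 / 2) := by ring
      _ ≤ ε * n.choose 3 := by gcongr; exact le_cast_choose_three n
  obtain ⟨hlower, hupper⟩ := abs_le.1 (abs_exKF_sub_le n)
  constructor <;> linarith
end
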